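/- arXiv:2010.02070 — 3 statements merged into one kernel-verified Lean document; each statement's English description precedes it below -/
import Mathlib

section
/- Let n = 5 or n ≥ 7, let L ≅ Sym(n) be the permutation group induced by the action of Sym(n) on the set of ordered pairs of distinct elements of {1,…,n}, and let (Γ,G) be a locally L pair. Then for every vertex x of Γ, the pointwise stabiliser G_x^{[2]} of the ball of radius 2 around x is trivial. -/
open MulAction Pointwise

/-- The set of ordered pairs of distinct elements of `{1,…,n}`. -/
abbrev OPairs (n : ℕ) : Type := {p : Fin n × Fin n // p.1 ≠ p.2}

/-- `Sym(n)` acts on the ordered pairs of distinct elements. -/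
instance opairsAction (n : ℕ) : MulAction (Equiv.Perm (Fin n)) (OPairs n) where
  smul σ p := ⟨(σ p.1.1, σ p.1.2), fun h => p.2 (σ.injective h)⟩
  one_smul p := rfl
  mul_smul σ τ p := rfl

/-- Every element of `G` is an automorphism of `Γ`. -/
def PreservesAdj {V : Type*} (Γ : SimpleGraph V) (G : Subgroup (Equiv.Perm V)) : Prop :=
  ∀ g ∈ G, ∀ u v : V, Γ.Adj u v ↔ Γ.Adj (g u) (g v)

/-- The pointwise stabiliser in `G` of the ball of radius `i` around `x`. -/
def ballStab {V : Type*} (Γ : SimpleGraph V) (G : Subgroup (Equiv.Perm V)) (x : V) (i : ℕ) :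
    Subgroup G :=
  ⨅ (v : V) (_ : Γ.dist x v ≤ i), MulAction.stabilizer G v

/-- `(Γ, G)` is a locally `L` pair, for `L` the permutation group induced by `Sym(n)` on
ordered pairs of distinct elements of `{1,…,n}`. -/
def IsLocallyOPairs (n : ℕ) {V : Type*} (Γ : SimpleGraph V) (G : Subgroup (Equiv.Perm V)) :
    Prop :=
  PreservesAdj Γ G ∧ MulAction.IsPretransitive G V ∧
  ∀ x : V, ∃ (e : Γ.neighborSet x ≃ OPairs n)
      (φ : MulAction.stabilizer G x →* Equiv.Perm (Fin n)),
    Function.Surjective φ ∧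
    ∀ (g : MulAction.stabilizer G x) (v : Γ.neighborSet x),
      ((e.symm (φ g • e v) : Γ.neighborSet x) : V) = g • (v : V)

section GroupPart

open Subgroup

/-- `SN H T`: the subgroup `T` is subnormal in `H`. -/
inductive SN {G : Type*} [Group G] (H : Subgroup G) : Subgroup G → Prop
  | refl : SN H H
  | step (K T : Subgroup G) : SN H K → T ≤ K → K ≤ normalizer (T : Set G) → SN H T

namespace SN

variable {G G' : Type*} [Group G] [Group G'] {H K T S : Subgroup G}

theorem le (h : SN H T) : T ≤ H := by
  induction h with
  | refl => exact le_rfl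
  | step K T _ hTK _ ih => exact hTK.trans ih

theorem trans (h1 : SN H K) (h2 : SN K T) : SN H T := by
  induction h2 with
  | refl => exact h1
  | step K' T' _ a b ih => exact SN.step K' T' ih a b

theorem of_normal (h1 : T ≤ H) (h2 : H ≤ normalizer (T : Set G)) : SN H T :=
  SN.step H T SN.refl h1 h2

theorem map (φ : G →* G') (h : SN H T) : SN (H.map φ) (T.map φ) := by
  induction h with
  | refl => exact SN.refl
  | step K T _ a b ih =>
    exact SN.step _ _ ih (Subgroup.map_mono a)
      ((Subgroup.map_mono b).trans (le_normalizer_map φ))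

theorem comap (φ : G' →* G) (h : SN H T) : SN (H.comap φ) (T.comap φ) := by
  induction h with
  | refl => exact SN.refl
  | step K T _ a b ih =>
    exact SN.step _ _ ih (Subgroup.comap_mono a)
      ((Subgroup.comap_mono b).trans (le_normalizer_comap φ))

theorem inf (h : SN H T) (K : Subgroup G) : SN (H ⊓ K) (T ⊓ K) := by
  induction h with
  | refl => exact SN.refl
  | step K' T _ a b ih =>
    refine SN.step _ _ ih (inf_le_inf_right _ a) ?_
    exact (inf_le_inf b le_normalizer).trans inf_normalizer_le_normalizer_inf

theorem of_le (h : SN H T) (hT : T ≤ K) (hK : K ≤ H) : SN K T := by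
  have := h.inf K
  rwa [inf_eq_right.2 hK, inf_eq_left.2 hT] at this

end SN

variable {G : Type*} [Group G]

/-- iterated commutators `[K,T,…,T]` -/
def itc (K T : Subgroup G) : ℕ → Subgroup G
  | 0 => K
  | m + 1 => ⁅itc K T m, T⁆

theorem perfect_subnormal_commutes {H K T : Subgroup G} (hT : SN H T) (hK : K ≤ H)
    (hKn : H ≤ normalizer (K : Set G)) (hTK : T ⊓ K = ⊥) (hperf : ⁅T, T⁆ = T) :
    ⁅K, T⁆ = ⊥ := by
  have h1 : ∀ S, SN H S → T ≤ S → ∃ m, itc K T m ≤ S := by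
    intro S hS
    induction hS with
    | refl => intro _; exact ⟨0, hK⟩
    | step K' S' _ a b ih =>
      intro hTS
      obtain ⟨m, hm⟩ := ih (hTS.trans a)
      refine ⟨m + 1, ?_⟩
      exact (commutator_mono hm hTS).trans (le_normalizer_iff_commutator_le_right.1 b)
  have h2 : ∀ m, itc K T m ≤ K := by
    intro m
    induction m with
    | zero => exact le_rfl
    | succ m ih =>
      exact (commutator_mono ih hT.le).trans (le_normalizer_iff_commutator_le_left.1 hKn)
  obtain ⟨m, hm⟩ := h1 T hT le_rfl
  have h3 : itc K T m = ⊥ := by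
    rw [eq_bot_iff, ← hTK]; exact le_inf hm (h2 m)
  have h4 : ∀ m, itc K T (m + 1) = ⊥ → itc K T 1 = ⊥ := by
    intro m
    induction m with
    | zero => exact id
    | succ m ih =>
      intro h
      apply ih
      have e1 : ⁅⁅T, itc K T m⁆, T⁆ = ⊥ := by rw [commutator_comm T]; exact h
      have e2 : ⁅⁅itc K T m, T⁆, T⁆ = ⊥ := h
      have := commutator_commutator_eq_bot_of_rotate e1 e2
      rw [hperf, commutator_comm] at this
      exact this
  cases m with
  | zero =>
    change K = ⊥ at h3
    rw [h3]; simp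
  | succ m => exact h4 m h3

theorem sSup_normalizer (Y : Subgroup G) (S : Set (Subgroup G))
    (h : ∀ g ∈ Y, ∀ A ∈ S, A.map (MulAut.conj g).toMonoidHom ∈ S) :
    Y ≤ normalizer ((sSup S : Subgroup G) : Set G) := by
  rw [le_normalizer_iff]
  intro g hg k hk
  have : (sSup S).map (MulAut.conj g).toMonoidHom ≤ sSup S := by
    rw [Subgroup.map_le_iff_le_comap]
    apply sSup_le
    intro A hA
    rw [← Subgroup.map_le_iff_le_comap]
    exact le_sSup (h g hg A hA)
  exact this ⟨k, hk, rfl⟩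

/-- minimal nontrivial subnormal subgroups -/
def MinSN (H T : Subgroup G) : Prop :=
  SN H T ∧ T ≠ ⊥ ∧ ∀ T', SN H T' → T' ≤ T → T' = ⊥ ∨ T' = T

theorem exists_minSN [Finite G] {H Q : Subgroup G} (hQ : SN H Q) (h0 : Q ≠ ⊥) :
    ∃ T ≤ Q, MinSN H T := by
  have hfin : {T : Subgroup G | SN H T ∧ T ≠ ⊥ ∧ T ≤ Q}.Finite := Set.toFinite _
  obtain ⟨T, hT⟩ := hfin.exists_minimal ⟨Q, hQ, h0, le_rfl⟩
  refine ⟨T, hT.1.2.2, hT.1.1, hT.1.2.1, ?_⟩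
  intro T' h1 h2
  by_contra! hcon
  exact hcon.2 (le_antisymm h2 (hT.2 ⟨h1, hcon.1, h2.trans hT.1.2.2⟩ h2))

theorem MinSN.map {H T : Subgroup G} (h : MinSN H T) (g : G) :
    MinSN (H.map (MulAut.conj g).toMonoidHom) (T.map (MulAut.conj g).toMonoidHom) := by
  have inv : ∀ A : Subgroup G, (A.map (MulAut.conj g⁻¹).toMonoidHom).map
      (MulAut.conj g).toMonoidHom = A := by
    intro A; ext a; simp [Subgroup.mem_map, mul_assoc]
  have inv' : ∀ A : Subgroup G, (A.map (MulAut.conj g).toMonoidHom).map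
      (MulAut.conj g⁻¹).toMonoidHom = A := by
    intro A; ext a; simp [Subgroup.mem_map, mul_assoc]
  refine ⟨h.1.map _, ?_, ?_⟩
  · intro h0; apply h.2.1
    rw [← inv' T, h0]; simp
  · intro T' h1 h2
    have := h1.map (MulAut.conj g⁻¹).toMonoidHom
    rw [inv'] at this
    have h3 := Subgroup.map_mono (f := (MulAut.conj g⁻¹).toMonoidHom) h2
    rw [inv'] at h3
    rcases h.2.2 _ this h3 with h4 | h4
    · left; rw [← inv T', h4]; simp
    · right; rw [← inv T', h4]

theorem MinSN.of_le {H K T : Subgroup G} (h : MinSN H T) (hT : T ≤ K) (hK : SN H K) :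
    MinSN K T :=
  ⟨h.1.of_le hT hK.le, h.2.1, fun T' h1 h2 => h.2.2 T' (hK.trans h1) h2⟩

theorem MinSN.trans {H K T : Subgroup G} (h : MinSN K T) (hK : SN H K) : MinSN H T :=
  ⟨hK.trans h.1, h.2.1, fun T' h1 h2 => h.2.2 T' (h1.of_le (h2.trans h.1.le) hK.le) h2⟩

theorem exists_pcore [Finite G] (p : ℕ) [Fact p.Prime] (H : Subgroup G) :
    ∃ P ≤ H, IsPGroup p P ∧ H ≤ normalizer (P : Set G) ∧
      ∀ B ≤ H, IsPGroup p B → H ≤ normalizer (B : Set G) → B ≤ P := by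
  have hfin : {P : Subgroup G | P ≤ H ∧ IsPGroup p P ∧ H ≤ normalizer (P : Set G)}.Finite :=
    Set.toFinite _
  obtain ⟨P, hP⟩ := hfin.exists_maximal ⟨⊥, bot_le, IsPGroup.of_bot, by
    rw [le_normalizer_iff]; intro h _ k hk; simp at hk; simp [hk]⟩
  refine ⟨P, hP.1.1, hP.1.2.1, hP.1.2.2, ?_⟩
  intro B hB hBp hBn
  have hsup : P ⊔ B ∈ {P : Subgroup G | P ≤ H ∧ IsPGroup p P ∧ H ≤ normalizer (P : Set G)} := by
    refine ⟨sup_le hP.1.1 hB, ?_, ?_⟩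
    · exact IsPGroup.to_sup_of_normal_right' hP.1.2.1 hBp (hP.1.1.trans hBn)
    · have := iInf_normalizer_le_normalizer_iSup (fun b : Bool => cond b P B)
      rw [iSup_bool_eq, iInf_bool_eq] at this
      exact (le_inf hP.1.2.2 hBn).trans this
  exact le_sup_right.trans (hP.2 hsup le_sup_left)

/-- The largest normal `3`-subgroup of `H`. -/
noncomputable def pc [Finite G] (H : Subgroup G) : Subgroup G :=
  (exists_pcore 3 H).choose

theorem pc_le [Finite G] (H : Subgroup G) : pc H ≤ H := (exists_pcore 3 H).choose_spec.1
theorem pc_p [Finite G] (H : Subgroup G) : IsPGroup 3 (pc H) := (exists_pcore 3 H).choose_spec.2.1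
theorem pc_n [Finite G] (H : Subgroup G) : H ≤ normalizer (pc H : Set G) :=
  (exists_pcore 3 H).choose_spec.2.2.1
theorem le_pc [Finite G] {H B : Subgroup G} (h1 : B ≤ H) (h2 : IsPGroup 3 B)
    (h3 : H ≤ normalizer (B : Set G)) : B ≤ pc H :=
  (exists_pcore 3 H).choose_spec.2.2.2 B h1 h2 h3

theorem normalizer_le_pc [Finite G] (H : Subgroup G) :
    normalizer (H : Set G) ≤ normalizer (pc H : Set G) := by
  rw [le_normalizer_iff]
  intro g hg k hk
  have e := mem_normalizer_iff_map_conj_eq.1 hg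
  have : (pc H).map (MulAut.conj g).toMonoidHom ≤ pc H := by
    apply le_pc
    · conv_rhs => rw [← e]
      exact Subgroup.map_mono (pc_le H)
    · exact (pc_p H).map _
    · conv_lhs => rw [← e]
      exact (Subgroup.map_mono (pc_n H)).trans (le_normalizer_map _)
  exact this ⟨k, hk, rfl⟩

theorem pc_mono [Finite G] {H T : Subgroup G} (h : SN H T) : pc T ≤ pc H := by
  induction h with
  | refl => exact le_rfl
  | step K T _ a b ih =>
    exact (le_pc ((pc_le T).trans a) (pc_p T) (b.trans (normalizer_le_pc T))).trans ih

theorem SN.le_pc [Finite G] {H T : Subgroup G} (h : SN H T) (hp : IsPGroup 3 T) : T ≤ pc H :=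
  (_root_.le_pc le_rfl hp le_normalizer).trans (pc_mono h)

end GroupPart

section PermPart

open Subgroup Equiv

variable {α : Type*} [Fintype α] [DecidableEq α]

theorem swap_mul_swap_mem_alt {c d d' e : α} (h1 : c ≠ d) (h2 : d' ≠ e) :
    swap c d * swap d' e ∈ alternatingGroup α := by
  rw [Perm.mem_alternatingGroup]
  simp [Perm.sign_swap h1, Perm.sign_swap h2]

theorem cent_alt (hα : 4 ≤ Fintype.card α) (t : Perm α)
    (ht : ∀ σ ∈ alternatingGroup α, t * σ = σ * t) : t = 1 := by
  ext c
  by_contra hc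
  simp only [Perm.coe_one, id] at hc
  obtain ⟨d, hd⟩ : ∃ d, d ∉ ({c, t c} : Finset α) := by
    by_contra! h
    have := Finset.card_le_card (fun x _ => h x : (Finset.univ : Finset α) ⊆ {c, t c})
    have := Finset.card_le_two (a := c) (b := t c)
    rw [Finset.card_univ] at *; omega
  obtain ⟨e, he⟩ : ∃ e, e ∉ ({c, t c, d} : Finset α) := by
    by_contra! h
    have := Finset.card_le_card (fun x _ => h x : (Finset.univ : Finset α) ⊆ {c, t c, d})
    have := Finset.card_le_three (a := c) (b := t c) (c := d)
    rw [Finset.card_univ] at *; omega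
  simp only [Finset.mem_insert, Finset.mem_singleton, not_or] at hd he
  have h := ht (swap (t c) d * swap d e) (swap_mul_swap_mem_alt (Ne.symm hd.2) (Ne.symm he.2.2))
  have h := congrArg (fun σ : Perm α => σ c) h
  simp only [Perm.mul_apply] at h
  rw [swap_apply_of_ne_of_ne (Ne.symm hd.1) (Ne.symm he.1),
    swap_apply_of_ne_of_ne (Ne.symm hc) (Ne.symm hd.1),
    swap_apply_of_ne_of_ne (Ne.symm hd.2) (Ne.symm he.2.1), swap_apply_left] at h
  exact hd.2 h.symm

theorem cent_alt3 (hα : Fintype.card α = 3) (t : Perm α)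
    (ht : ∀ σ ∈ alternatingGroup α, t * σ = σ * t) : t ∈ alternatingGroup α := by
  by_cases h1 : t = 1
  · rw [h1]; exact one_mem _
  obtain ⟨c, hc⟩ : ∃ c, t c ≠ c := by
    by_contra! h; exact h1 (by ext x; simp [h x])
  obtain ⟨e, he⟩ : ∃ d, d ∉ ({c, t c} : Finset α) := by
    by_contra! h
    have := Finset.card_le_card (fun x _ => h x : (Finset.univ : Finset α) ⊆ {c, t c})
    have := Finset.card_le_two (a := c) (b := t c)
    rw [Finset.card_univ] at *; omega
  simp only [Finset.mem_insert, Finset.mem_singleton, not_or] at he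
  set d := t c with hd
  have hmem : swap c d * swap d e ∈ alternatingGroup α :=
    swap_mul_swap_mem_alt (Ne.symm hc) (Ne.symm he.2)
  have h := ht _ hmem
  have sc : (swap c d * swap d e) c = d := by
    rw [Perm.mul_apply, swap_apply_of_ne_of_ne (Ne.symm hc) (Ne.symm he.1), swap_apply_left]
  have sd : (swap c d * swap d e) d = e := by
    rw [Perm.mul_apply, swap_apply_left, swap_apply_of_ne_of_ne he.1 he.2]
  have se : (swap c d * swap d e) e = c := by
    rw [Perm.mul_apply, swap_apply_right, swap_apply_right]
  have td : t d = e := by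
    have h := congrArg (fun σ : Perm α => σ c) h
    simp only [Perm.mul_apply t, Perm.mul_apply _ t] at h
    rw [sc, ← hd, sd] at h; exact h
  have te : t e = c := by
    have h := congrArg (fun σ : Perm α => σ d) h
    simp only [Perm.mul_apply t, Perm.mul_apply _ t] at h
    rw [sd, td, se] at h; exact h
  have huniv : ({c, d, e} : Finset α) = Finset.univ := by
    apply Finset.eq_univ_of_card
    rw [hα, Finset.card_eq_three]
    exact ⟨c, d, e, Ne.symm hc, Ne.symm he.1, Ne.symm he.2, rfl⟩
  have : t = swap c d * swap d e := by
    ext x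
    have hx : x ∈ ({c, d, e} : Finset α) := by rw [huniv]; exact Finset.mem_univ _
    simp only [Finset.mem_insert, Finset.mem_singleton] at hx
    rcases hx with rfl | rfl | rfl
    · rw [sc]
    · rw [sd, td]
    · rw [se, te]
  rw [this]; exact hmem

theorem alt_simple (hα : Fintype.card α = 3 ∨ 5 ≤ Fintype.card α) :
    IsSimpleGroup (alternatingGroup α) := by
  rcases hα with h | h
  · haveI : Fact (Nat.Prime 3) := ⟨Nat.prime_three⟩
    haveI : Nontrivial α := by rw [← Fintype.one_lt_card_iff_nontrivial]; omega
    apply isSimpleGroup_of_prime_card (p := 3)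
    rw [nat_card_alternatingGroup, Nat.card_eq_fintype_card, h]; rfl
  · exact alternatingGroup.isSimpleGroup (by rwa [Nat.card_eq_fintype_card])

theorem sn_perm (hα : Fintype.card α = 3 ∨ 5 ≤ Fintype.card α) {T : Subgroup (Perm α)}
    (h : SN ⊤ T) : T = ⊥ ∨ alternatingGroup α ≤ T := by
  haveI := alt_simple hα
  induction h with
  | refl => right; exact le_top
  | step K T _ a b ih =>
    rcases ih with rfl | ih
    · left; exact eq_bot_iff.2 a
    have hN : (T.subgroupOf (alternatingGroup α)).Normal := by
      rw [normal_subgroupOf_iff_le_normalizer_inf]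
      refine le_trans (le_inf (ih.trans b) le_normalizer) inf_normalizer_le_normalizer_inf
    rcases hN.eq_bot_or_eq_top with h | h
    · left
      rw [subgroupOf_eq_bot, disjoint_iff] at h
      have hcomm : ⁅T, alternatingGroup α⁆ = ⊥ := by
        rw [eq_bot_iff, ← h]
        refine le_inf ?_ ?_
        · exact le_normalizer_iff_commutator_le_left.1 (ih.trans b)
        · exact commutator_le_right _ _
      have hcent : ∀ t ∈ T, ∀ σ ∈ alternatingGroup α, t * σ = σ * t := by
        intro t ht σ hσ
        rw [← commutatorElement_eq_one_iff_mul_comm]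
        have := commutator_mem_commutator ht hσ
        rwa [hcomm] at this
      rw [eq_bot_iff]
      intro t ht
      rcases hα with h3 | h5
      · rw [← h]; exact ⟨ht, cent_alt3 h3 t (hcent t ht)⟩
      · exact cent_alt (by omega) t (hcent t ht)
    · right
      exact subgroupOf_eq_top.1 h

theorem alt_noncomm (hα : 5 ≤ Fintype.card α) {T : Subgroup (Perm α)}
    (h : alternatingGroup α ≤ T) : ⁅T, T⁆ ≠ ⊥ := by
  intro h0
  haveI := alt_simple (α := α) (Or.inr hα)
  obtain ⟨⟨t, ht⟩, hne⟩ := exists_ne (1 : alternatingGroup α)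
  apply hne
  apply Subtype.ext
  apply cent_alt (by omega)
  intro σ hσ
  rw [← commutatorElement_eq_one_iff_mul_comm]
  have := commutator_mem_commutator (h ht) (h hσ)
  rwa [h0] at this

end PermPart

section Core

open Subgroup Equiv

variable {G : Type*} [Group G]

theorem norm_map_eq {A : Subgroup G} {g : G} (h : g ∈ normalizer (A : Set G)) :
    A.map (MulAut.conj g).toMonoidHom = A := mem_normalizer_iff_map_conj_eq.1 h

theorem normalizer_le_centralizer_normalizer (s : Set G) :
    normalizer s ≤ normalizer (centralizer s : Set G) :=
  le_normalizer_of_normal_subgroupOf (centralizer_le_normalizer s)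

/-- The abstract local data: `X` a vertex stabiliser, `H` an arc stabiliser, `K` the kernel of the
local action of `X`, and `f` an element reversing the edge. -/
structure Setup {α : Type*} [Fintype α] [DecidableEq α] (X H K : Subgroup G) (f : G)
    (ψ : H →* Perm α) : Prop where
  hKH : K ≤ H
  hHX : H ≤ X
  hKn : X ≤ normalizer (K : Set G)
  hf : f ∈ normalizer (H : Set G)
  ff : f * f ∈ H
  cf : ∀ M ≤ H, X ≤ normalizer (M : Set G) → f ∈ normalizer (M : Set G) → M = ⊥
  surj : Function.Surjective ψ
  ker : ∀ h : H, ψ h = 1 ↔ (h : G) ∈ K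
  tr : ∀ D ≤ X, X ≤ normalizer (D : Set G) → ¬ D ≤ K → ∀ g ∈ X, ∃ d ∈ D, d⁻¹ * g ∈ H
  five : Fintype.card α = 3 → ∀ s ∈ H, s ∉ K → (∃ k, s ^ (3 ^ k) = 1) →
    ∃ h ∈ X, s * (h * s * h⁻¹) ∉ K ∧ (s * (h * s * h⁻¹)) ^ 5 ∈ K

namespace Setup

variable {α : Type*} [Fintype α] [DecidableEq α] {X H K : Subgroup G} {f : G} {ψ : H →* Perm α}

theorem central (S : Setup X H K f ψ) {D U : Subgroup G} (hD : D ≤ X)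
    (hDn : X ≤ normalizer (D : Set G)) (hDK : ¬ D ≤ K) (hU : U ≤ H)
    (hUn : H ≤ normalizer (U : Set G)) (hUf : f ∈ normalizer (U : Set G))
    (hc : D ≤ centralizer (U : Set G)) : U = ⊥ := by
  apply S.cf U hU _ hUf
  intro g hg
  obtain ⟨d, hd, hdg⟩ := S.tr D hD hDn hDK g hg
  have : g = d * (d⁻¹ * g) := by group
  rw [this]
  exact mul_mem (centralizer_le_normalizer _ (hc hd)) (hUn hdg)

theorem sub (S : Setup X H K f ψ) (Pr : Subgroup G → Prop)
    (hPr : ∀ T g, Pr T → Pr (T.map (MulAut.conj g).toMonoidHom))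
    (h : ∀ T, MinSN H T → Pr T → T ≤ K) : ∀ T, MinSN H T → ¬ Pr T := by
  intro T hT hPT
  have hSN : SN H K := SN.of_normal S.hKH (S.hHX.trans S.hKn)
  have h0 : sSup {T | MinSN H T ∧ Pr T} = ⊥ := by
    apply S.cf
    · exact sSup_le fun T hT => hT.1.1.le
    · apply sSup_normalizer
      rintro g hg A ⟨hA, hPA⟩
      refine ⟨?_, hPr _ _ hPA⟩
      have h1 := (hA.of_le (h A hA hPA) hSN).map g
      rw [norm_map_eq (S.hKn hg)] at h1
      exact h1.trans hSN
    · have : normalizer (H : Set G) ≤ _ := sSup_normalizer (normalizer (H : Set G))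
        {T | MinSN H T ∧ Pr T} (by
          rintro g hg A ⟨hA, hPA⟩
          refine ⟨?_, hPr _ _ hPA⟩
          have h1 := hA.map g
          rwa [norm_map_eq hg] at h1)
      exact this S.hf
  have : T ≤ sSup {T | MinSN H T ∧ Pr T} := le_sSup ⟨hT, hPT⟩
  rw [h0] at this
  exact hT.2.1 (eq_bot_iff.2 this)

theorem image (S : Setup X H K f ψ) (hα : Fintype.card α = 3 ∨ 5 ≤ Fintype.card α)
    {T : Subgroup G} (hT : MinSN H T) (hTK : ¬ T ≤ K) :
    T ⊓ K = ⊥ ∧ alternatingGroup α ≤ (T.subgroupOf H).map ψ := by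
  constructor
  · have : SN H (T ⊓ K) := by
      refine hT.1.trans (SN.of_normal inf_le_left ?_)
      exact (le_inf le_normalizer (hT.1.le.trans (S.hHX.trans S.hKn))).trans
        inf_normalizer_le_normalizer_inf
    rcases hT.2.2 _ this inf_le_left with h | h
    · exact h
    · exact absurd (inf_eq_left.1 h) hTK
  · have h1 : SN ⊤ ((T.subgroupOf H).map ψ) := by
      have := (hT.1.comap H.subtype).map ψ
      have e : (H.comap H.subtype).map ψ = ⊤ := by
        rw [show H.comap H.subtype = ⊤ from subgroupOf_self H]
        rw [← MonoidHom.range_eq_map, MonoidHom.range_eq_top]; exact S.surj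
      rwa [e] at this
    rcases sn_perm hα h1 with h | h
    · exfalso; apply hTK
      intro t ht
      have : ψ ⟨t, hT.1.le ht⟩ ∈ (T.subgroupOf H).map ψ := ⟨_, ht, rfl⟩
      rw [h, mem_bot, S.ker] at this
      exact this
    · exact h

theorem fconj (S : Setup X H K f ψ) :
    f ∈ normalizer ((K ⊓ K.map (MulAut.conj f).toMonoidHom : Subgroup G) : Set G) := by
  rw [mem_normalizer_iff_map_conj_eq, Subgroup.map_inf _ _ _ (MulAut.conj f).injective, inf_comm]
  congr 1
  rw [Subgroup.map_map]
  have h := mem_normalizer_iff_map_conj_eq.1 (S.hKn (S.hHX S.ff))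
  conv_rhs => rw [← h]
  congr 1
  ext g
  simp

theorem Kf_le (S : Setup X H K f ψ) : K.map (MulAut.conj f).toMonoidHom ≤ H := by
  have := Subgroup.map_mono (f := (MulAut.conj f).toMonoidHom) S.hKH
  rwa [norm_map_eq S.hf] at this

theorem Kf_norm (S : Setup X H K f ψ) :
    H ≤ normalizer (K.map (MulAut.conj f).toMonoidHom : Set G) := by
  have := Subgroup.map_mono (f := (MulAut.conj f).toMonoidHom) (S.hHX.trans S.hKn)
  rw [norm_map_eq S.hf] at this
  exact this.trans (le_normalizer_map _)

theorem Q_norm (S : Setup X H K f ψ) :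
    H ≤ normalizer ((K ⊓ K.map (MulAut.conj f).toMonoidHom : Subgroup G) : Set G) :=
  (le_inf (S.hHX.trans S.hKn) S.Kf_norm).trans inf_normalizer_le_normalizer_inf

theorem large [Finite G] (S : Setup X H K f ψ) (hα : 5 ≤ Fintype.card α) :
    K ⊓ K.map (MulAut.conj f).toMonoidHom = ⊥ := by
  by_contra hQ
  have hQSN : SN H (K ⊓ K.map (MulAut.conj f).toMonoidHom) :=
    SN.of_normal (inf_le_left.trans S.hKH) S.Q_norm
  obtain ⟨T0, _, hT0⟩ := exists_minSN hQSN hQ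
  have : ∃ T, MinSN H T ∧ ¬ T ≤ K := by
    by_contra! h
    exact S.sub (fun _ => True) (fun _ _ _ => trivial) (fun T hT _ => h T hT) T0 hT0 trivial
  obtain ⟨T, hT, hTK⟩ := this
  obtain ⟨h1, h2⟩ := S.image (Or.inr hα) hT hTK
  have hperf : ⁅T, T⁆ = T := by
    have hle : ⁅T, T⁆ ≤ T := commutator_le_self T
    have hSN : SN H ⁅T, T⁆ := by
      refine hT.1.trans (SN.of_normal hle ?_)
      rw [le_normalizer_iff_commutator_le_right]
      exact commutator_mono le_rfl hle
    rcases hT.2.2 _ hSN hle with h | h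
    · exfalso
      apply alt_noncomm hα h2
      rw [← Subgroup.map_commutator]
      rw [eq_bot_iff, Subgroup.map_le_iff_le_comap, commutator_le]
      intro a ha b hb
      have hab := commutator_mem_commutator (H₁ := T) (H₂ := T) ha hb
      rw [h, mem_bot] at hab
      have hab2 : a * b * a⁻¹ * b⁻¹ = 1 := Subtype.ext hab
      rw [commutatorElement_def, hab2]; exact one_mem _
    · exact h
  have hcomm := perfect_subnormal_commutes hT.1 S.hKH (S.hHX.trans S.hKn) h1 hperf
  rw [commutator_comm, commutator_eq_bot_iff_le_centralizer] at hcomm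
  apply hQ
  apply S.central (D := X ⊓ centralizer (K : Set G)) inf_le_left
  · exact (le_inf le_normalizer (S.hKn.trans (normalizer_le_centralizer_normalizer _))).trans
      inf_normalizer_le_normalizer_inf
  · intro h
    exact hTK ((le_inf (hT.1.le.trans S.hHX) hcomm).trans h)
  · exact inf_le_left.trans S.hKH
  · exact S.Q_norm
  · exact S.fconj
  · exact inf_le_right.trans (centralizer_le inf_le_left)

theorem p3 (S : Setup X H K f ψ) (hα : Fintype.card α = 3)
    {T : Subgroup G} (hT : MinSN H T) (hTK : ¬ T ≤ K) : IsPGroup 3 T := by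
  obtain ⟨h1, h2⟩ := S.image (Or.inl hα) hT hTK
  have hcard : Nat.card (alternatingGroup α) = 3 := by
    have : Nontrivial α := by rw [← Fintype.one_lt_card_iff_nontrivial]; omega
    rw [nat_card_alternatingGroup, Nat.card_eq_fintype_card, hα]; rfl
  have hpow : ∀ t (ht : t ∈ T), ψ ⟨t, hT.1.le ht⟩ ∈ alternatingGroup α → t ^ 3 = 1 := by
    intro t ht hA
    have e : (⟨_, hA⟩ : alternatingGroup α) ^ 3 = 1 := by rw [← hcard]; exact pow_card_eq_one'
    have e := congrArg Subtype.val e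
    simp only [SubmonoidClass.mk_pow, OneMemClass.coe_one, ← map_pow] at e
    rw [S.ker] at e
    have : t ^ 3 ∈ T ⊓ K := ⟨pow_mem ht 3, by simpa using e⟩
    rwa [h1, mem_bot] at this
  set T0 : Subgroup G := T ⊓ ((alternatingGroup α).comap ψ).map H.subtype with hT0
  have hSN : SN H T0 := by
    refine hT.1.trans (SN.of_normal inf_le_left ?_)
    refine (le_inf le_normalizer ?_).trans inf_normalizer_le_normalizer_inf
    refine hT.1.le.trans ?_
    rw [le_normalizer_iff]
    rintro h hh k ⟨k', hk', rfl⟩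
    exact ⟨⟨h, hh⟩ * k' * ⟨h, hh⟩⁻¹, (Normal.conj_mem inferInstance k' hk' _), rfl⟩
  rcases hT.2.2 _ hSN inf_le_left with h | h
  · exfalso
    have := alt_simple (α := α) (Or.inl hα)
    obtain ⟨⟨σ, hσ⟩, hne⟩ := exists_ne (1 : alternatingGroup α)
    obtain ⟨t, ht, rfl⟩ := h2 hσ
    have : (t : G) ∈ T0 := ⟨ht, t, hσ, rfl⟩
    rw [h, mem_bot] at this
    have : t = 1 := Subtype.ext this
    apply hne; apply Subtype.ext; simp [this]
  · rintro ⟨t, ht⟩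
    refine ⟨1, Subtype.ext ?_⟩
    have ht' := ht
    rw [← h] at ht'
    obtain ⟨t', h3, h4⟩ := ht'.2
    simp only [pow_one, SubmonoidClass.mk_pow, OneMemClass.coe_one]
    apply hpow t ht
    have : (⟨t, hT.1.le ht⟩ : H) = t' := Subtype.ext h4.symm
    rw [this]; exact h3

theorem index3 [Finite G] (S : Setup X H K f ψ) (hα : Fintype.card α = 3)
    {A : Subgroup G} (hA : A ≤ H) (hp : IsPGroup 3 A) : K.relIndex A ≤ 3 := by
  have hker : K.subgroupOf A = (ψ.comp (inclusion hA)).ker := by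
    ext a
    rw [mem_subgroupOf, MonoidHom.mem_ker, MonoidHom.comp_apply, S.ker]
    rfl
  have : K.relIndex A = Nat.card (ψ.comp (inclusion hA)).range := by
    rw [← index_ker, ← hker]
    rfl
  rw [this]
  have h1 : Nat.card (ψ.comp (inclusion hA)).range ∣ 6 := by
    have := (ψ.comp (inclusion hA)).range.card_subgroup_dvd_card
    rw [Nat.card_perm, Nat.card_eq_fintype_card (α := α), hα] at this
    exact this
  have h2 : IsPGroup 3 (ψ.comp (inclusion hA)).range := 
    hp.of_surjective _ (MonoidHom.rangeRestrict_surjective _)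
  have : Fact (Nat.Prime 3) := ⟨Nat.prime_three⟩
  obtain ⟨k, hk⟩ := IsPGroup.iff_card.1 h2
  rw [hk] at h1 ⊢
  rcases k with _ | _ | k
  · norm_num
  · norm_num
  · exfalso
    have : 3 ^ 2 ∣ 6 := (pow_dvd_pow 3 (by omega)).trans h1
    norm_num at this

end Setup

theorem five_element_centralizes [Finite G] {V : Subgroup G} (hV : IsPGroup 3 V) {d : G}
    (hd : IsPGroup 5 (zpowers d)) (hn : d ∈ normalizer (V : Set G))
    (hi : (centralizer {d}).relIndex V ≤ 9) : V ≤ centralizer {d} := by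
  have : Fact (Nat.Prime 3) := ⟨Nat.prime_three⟩
  have : Fact (Nat.Prime 5) := ⟨Nat.prime_five⟩
  have hz : zpowers d ≤ normalizer (V : Set G) := by rwa [zpowers_le]
  let _ : MulAction (zpowers d) V := MulAction.compHom V (inclusion hz)
  have h1 := hd.card_modEq_card_fixedPoints V
  have h2 : Nat.card (MulAction.fixedPoints (zpowers d) V) =
      Nat.card ((centralizer {d}).subgroupOf V) := by
    apply Nat.card_congr
    apply Equiv.setCongr
    ext v
    constructor
    · intro h
      have := congrArg Subtype.val (h ⟨d, mem_zpowers d⟩)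
      change d * (v : G) * d⁻¹ = v at this
      rw [SetLike.mem_coe, mem_subgroupOf, mem_centralizer_singleton_iff]
      rw [mul_inv_eq_iff_eq_mul] at this
      first | exact this | exact this.symm
    · intro h
      rw [SetLike.mem_coe, mem_subgroupOf, mem_centralizer_singleton_iff] at h
      rintro ⟨g, hg⟩
      apply Subtype.ext
      change g * (v : G) * g⁻¹ = v
      rw [mul_inv_eq_iff_eq_mul]
      have : Commute d (v : G) := by
        first | exact h | exact h.symm
      obtain ⟨k, rfl⟩ := hg
      exact this.zpow_left k
  rw [h2] at h1
  have h3 := ((centralizer {d}).subgroupOf V).card_mul_index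
  change _ * (centralizer {d}).relIndex V = _ at h3
  obtain ⟨k, hk⟩ := IsPGroup.iff_card.1 hV
  rw [← h3] at h1
  have hdvd : (centralizer {d}).relIndex V ∣ 3 ^ k := by rw [← hk]; exact relIndex_dvd_card _ _
  obtain ⟨j, _, hj⟩ := (Nat.dvd_prime_pow Nat.prime_three).1 hdvd
  have hdvd' : Nat.card ((centralizer {d}).subgroupOf V) ∣ 3 ^ k := by
    rw [← hk]; exact card_subgroup_dvd_card _
  have hcop : Nat.Coprime 5 (Nat.card ((centralizer {d}).subgroupOf V)) :=
    Nat.Coprime.coprime_dvd_right hdvd' (Nat.Coprime.pow_right k (by norm_num))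
  have h4 : (centralizer {d}).relIndex V ≡ 1 [MOD 5] := by
    apply Nat.ModEq.cancel_left_of_coprime (c := Nat.card ((centralizer {d}).subgroupOf V)) hcop
    simpa using h1
  rw [← relIndex_eq_one]
  rw [hj] at hi h4 ⊢
  rcases j with _ | _ | _ | j
  · rfl
  · exact absurd h4 (by decide)
  · exact absurd h4 (by decide)
  · exfalso
    have : 3 ^ 3 ≤ 3 ^ (j + 1 + 1 + 1) := Nat.pow_le_pow_right (by norm_num) (by omega)
    omega

end Core

section Small

open Subgroup Equiv

variable {G : Type*} [Group G]

theorem le_norm_inf {Y A B : Subgroup G} (hA : Y ≤ normalizer (A : Set G))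
    (hB : Y ≤ normalizer (B : Set G)) : Y ≤ normalizer ((A ⊓ B : Subgroup G) : Set G) :=
  (le_inf hA hB).trans inf_normalizer_le_normalizer_inf

theorem card_map_conj (A : Subgroup G) (g : G) :
    Nat.card (A.map (MulAut.conj g).toMonoidHom) = Nat.card A :=
  (Nat.card_congr (A.equivMapOfInjective (MulAut.conj g).toMonoidHom
    (MulAut.conj g).injective).toEquiv).symm

/-- abelian subgroups of `P` of maximal order -/
def MaxAb (P A : Subgroup G) : Prop :=
  A ≤ P ∧ A ≤ centralizer (A : Set G) ∧
    ∀ B ≤ P, B ≤ centralizer (B : Set G) → Nat.card B ≤ Nat.card A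

theorem abelian_map {A : Subgroup G} (h : A ≤ centralizer (A : Set G)) (g : G) :
    A.map (MulAut.conj g).toMonoidHom ≤
      centralizer (A.map (MulAut.conj g).toMonoidHom : Set G) := by
  rintro _ ⟨a, ha, rfl⟩
  rw [mem_centralizer_iff]
  rintro _ ⟨b, hb, rfl⟩
  rw [← map_mul, ← map_mul, mem_centralizer_iff.1 (h ha) b hb]

theorem MaxAb.map {P A : Subgroup G} (h : MaxAb P A) {g : G}
    (hg : A.map (MulAut.conj g).toMonoidHom ≤ P) :
    MaxAb P (A.map (MulAut.conj g).toMonoidHom) :=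
  ⟨hg, abelian_map h.2.1 g, fun B h1 h2 => by rw [card_map_conj]; exact h.2.2 B h1 h2⟩

theorem exists_maxAb [Finite G] (P : Subgroup G) : ∃ A, MaxAb P A := by
  obtain ⟨A, hA, hm⟩ := Set.exists_max_image
    {A : Subgroup G | A ≤ P ∧ A ≤ centralizer (A : Set G)} (fun A => Nat.card A)
    (Set.toFinite _) ⟨⊥, bot_le, bot_le⟩
  exact ⟨A, hA.1, hA.2, fun B h1 h2 => hm B ⟨h1, h2⟩⟩

theorem zpowers_abelian (z : G) : zpowers z ≤ centralizer (zpowers z : Set G) := by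
  rintro _ ⟨i, rfl⟩
  rw [mem_centralizer_iff]
  rintro _ ⟨j, rfl⟩
  exact ((Commute.refl z).zpow_zpow j i)

theorem card_relIndex {A B : Subgroup G} (h : A ≤ B) :
    Nat.card A * A.relIndex B = Nat.card B := by
  rw [← relIndex_bot_left, ← relIndex_bot_left]
  exact relIndex_mul_relIndex _ _ _ bot_le h

theorem relIndex_ne_zero' [Finite G] (A B : Subgroup G) : A.relIndex B ≠ 0 := by
  have h : A.relIndex B ∣ Nat.card B := relIndex_dvd_card _ _
  intro h0
  rw [h0, zero_dvd_iff] at h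
  exact Nat.card_pos.ne' h

theorem exists_five_part [Finite G] {K : Subgroup G} {r : G} (h1 : r ∉ K) (h5 : r ^ 5 ∈ K) :
    ∃ m : ℕ, r ^ m ∉ K ∧ IsPGroup 5 (zpowers (r ^ m)) := by
  have : Fact (Nat.Prime 5) := ⟨Nat.prime_five⟩
  have ho : orderOf r ≠ 0 := (orderOf_pos r).ne'
  have e := Nat.ordProj_mul_ordCompl_eq_self (orderOf r) 5
  have hc := Nat.coprime_ordCompl Nat.prime_five ho
  set m := orderOf r / 5 ^ (orderOf r).factorization 5 with hm
  set k := (orderOf r).factorization 5 with hk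
  refine ⟨m, ?_, ?_⟩
  · intro h
    apply h1
    have e2 := Nat.gcd_eq_gcd_ab 5 m
    rw [hc] at e2
    have : r = (r ^ 5) ^ (Nat.gcdA 5 m) * (r ^ m) ^ (Nat.gcdB 5 m) := by
      rw [← zpow_natCast, ← zpow_natCast, ← zpow_mul, ← zpow_mul, ← zpow_add, ← e2]
      simp
    rw [this]
    exact mul_mem (zpow_mem h5 _) (zpow_mem h _)
  · have hd : orderOf (r ^ m) ∣ 5 ^ k := by
      apply orderOf_dvd_of_pow_eq_one
      rw [← pow_mul, mul_comm, e, pow_orderOf_eq_one]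
    obtain ⟨j, _, hj⟩ := (Nat.dvd_prime_pow Nat.prime_five).1 hd
    exact IsPGroup.of_card (n := j) (by rw [Nat.card_zpowers, hj])

namespace Setup

variable {α : Type*} [Fintype α] [DecidableEq α] {X H K : Subgroup G} {f : G} {ψ : H →* Perm α}

theorem exists_five [Finite G] (S : Setup X H K f ψ) (hα : Fintype.card α = 3)
    {P V A : Subgroup G} (hPH : P ≤ H) (hPp : IsPGroup 3 P) (hVP : V ≤ P ⊓ K)
    (hVc : V ≤ centralizer ((P ⊓ K : Subgroup G) : Set G))
    (hVX : X ≤ normalizer (V : Set G)) (hA : MaxAb P A) (hAK : ¬ A ≤ K) :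
    ¬ X ⊓ centralizer (V : Set G) ≤ K := by
  obtain ⟨s, hsA, hsK⟩ := SetLike.not_le_iff_exists.1 hAK
  obtain ⟨k, hk⟩ := hPp ⟨s, hA.1 hsA⟩
  have hk : s ^ 3 ^ k = 1 := by simpa using congrArg Subtype.val hk
  obtain ⟨h, hhX, hr, hr5⟩ := S.five hα s (hPH (hA.1 hsA)) hsK ⟨k, hk⟩
  have hAp : IsPGroup 3 A := hPp.to_le hA.1
  have hindA : K.relIndex A ≤ 3 := S.index3 hα (hA.1.trans hPH) hAp
  have hA0 : A ⊓ K ≤ P ⊓ K := inf_le_inf_right _ hA.1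
  have hAA : A ⊓ K ≤ centralizer ((A ⊓ K : Subgroup G) : Set G) :=
    inf_le_left.trans (hA.2.1.trans (centralizer_le inf_le_left))
  have hVA : V ≤ centralizer ((A ⊓ K : Subgroup G) : Set G) := hVc.trans (centralizer_le hA0)
  have hVV : V ≤ centralizer (V : Set G) := hVc.trans (centralizer_le hVP)
  have hWc : (A ⊓ K) ⊔ V ≤ centralizer (((A ⊓ K) ⊔ V : Subgroup G) : Set G) :=
    sup_le (le_centralizer_iff.2 (sup_le hAA hVA))
      (le_centralizer_iff.2 (sup_le (le_centralizer_iff.2 hVA) hVV))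
  have hW := hA.2.2 _ (sup_le (inf_le_left.trans hA.1) (hVP.trans inf_le_left)) hWc
  rw [← card_relIndex (le_sup_left : A ⊓ K ≤ (A ⊓ K) ⊔ V),
    ← card_relIndex (inf_le_left : A ⊓ K ≤ A), inf_relIndex_left] at hW
  have hW3 : (A ⊓ K).relIndex ((A ⊓ K) ⊔ V) ≤ 3 :=
    (Nat.le_of_mul_le_mul_left hW Nat.card_pos).trans hindA
  have hV3 : (A ⊓ K).relIndex V ≤ 3 :=
    (relIndex_le_of_le_right le_sup_right (relIndex_ne_zero' _ _)).trans hW3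
  have hs3 : (centralizer {s}).relIndex V ≤ 3 := by
    refine (relIndex_le_of_le_left ?_ (relIndex_ne_zero' _ _)).trans hV3
    exact inf_le_left.trans (hA.2.1.trans (centralizer_le (Set.singleton_subset_iff.2 hsA)))
  have hs3' : (centralizer {h * s * h⁻¹}).relIndex V ≤ 3 := by
    have e := relIndex_map_map_of_injective (f := (MulAut.conj h).toMonoidHom)
      (centralizer {s}) V (MulAut.conj h).injective
    rw [norm_map_eq (hVX hhX)] at e
    rw [← e] at hs3
    refine (relIndex_le_of_le_left ?_ (relIndex_ne_zero' _ _)).trans hs3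
    rintro _ ⟨c, hc, rfl⟩
    have hc' : c * s = s * c := mem_centralizer_singleton_iff.1 hc
    rw [mem_centralizer_singleton_iff]
    change MulAut.conj h c * MulAut.conj h s = MulAut.conj h s * MulAut.conj h c
    rw [← map_mul, hc', map_mul]
  set r := s * (h * s * h⁻¹) with hrdef
  have hr9 : (centralizer {r}).relIndex V ≤ 9 := by
    have h1 : (centralizer {s} ⊓ centralizer {h * s * h⁻¹}).relIndex V ≤ 3 * 3 :=
      relIndex_inf_le.trans (Nat.mul_le_mul hs3 hs3')
    refine (relIndex_le_of_le_left ?_ (relIndex_ne_zero' _ _)).trans h1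
    rintro c ⟨hc1, hc2⟩
    replace hc1 := mem_centralizer_singleton_iff.1 hc1
    replace hc2 := mem_centralizer_singleton_iff.1 hc2
    rw [mem_centralizer_singleton_iff, hrdef]
    exact (Commute.mul_right (show Commute c s from hc1) (show Commute c _ from hc2))
  obtain ⟨m, hm1, hm2⟩ := exists_five_part hr hr5
  have hrX : r ∈ X := by
    have hsX : s ∈ X := S.hHX (hPH (hA.1 hsA))
    exact mul_mem hsX (mul_mem (mul_mem hhX hsX) (inv_mem hhX))
  have hd9 : (centralizer {r ^ m}).relIndex V ≤ 9 := by
    refine (relIndex_le_of_le_left ?_ (relIndex_ne_zero' _ _)).trans hr9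
    intro c hc
    rw [mem_centralizer_singleton_iff] at hc ⊢
    exact (show Commute c r from hc).pow_right m
  have hfin := five_element_centralizes ((hPp.to_le inf_le_left).to_le hVP) hm2
    (hVX (pow_mem hrX m)) hd9
  intro hle
  apply hm1
  apply hle
  refine ⟨pow_mem hrX m, ?_⟩
  refine mem_centralizer_iff.2 ?_
  intro v hv
  exact mem_centralizer_singleton_iff.1 (hfin hv)

theorem small [Finite G] (S : Setup X H K f ψ) (hα : Fintype.card α = 3) :
    K ⊓ K.map (MulAut.conj f).toMonoidHom = ⊥ := by
  have : Fact (Nat.Prime 3) := ⟨Nat.prime_three⟩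
  by_contra hQ
  have hQSN : SN H (K ⊓ K.map (MulAut.conj f).toMonoidHom) :=
    SN.of_normal (inf_le_left.trans S.hKH) S.Q_norm
  have hHK := S.hHX.trans S.hKn
  obtain ⟨T0, hT0Q, hT0⟩ := exists_minSN hQSN hQ
  obtain ⟨T, hT, hTK⟩ : ∃ T, MinSN H T ∧ ¬ T ≤ K := by
    by_contra! h
    exact S.sub (fun _ => True) (fun _ _ _ => trivial) (fun T hT _ => h T hT) T0 hT0 trivial
  have hTP : T ≤ pc H := hT.1.le_pc (S.p3 hα hT hTK)
  have hT0p : IsPGroup 3 T0 := by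
    by_contra hcon
    refine S.sub (fun T => ¬ IsPGroup 3 T) (fun T g h h' => h ?_)
      (fun T hT h => by_contra fun hk => h (S.p3 hα hT hk)) T0 hT0 hcon
    exact h'.of_equiv (T.equivMapOfInjective _ (MulAut.conj g).injective).symm
  have hT0P : T0 ≤ pc H := hT0.1.le_pc hT0p
  have hPK : pc H ⊓ K = pc K := by
    apply le_antisymm
    · apply le_pc inf_le_right ((pc_p H).to_le inf_le_left)
      exact le_norm_inf (S.hKH.trans (pc_n H)) le_normalizer
    · apply le_inf _ (pc_le K)
      exact le_pc ((pc_le K).trans S.hKH) (pc_p K) (hHK.trans (normalizer_le_pc K))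
  have hPKn : X ≤ normalizer ((pc H ⊓ K : Subgroup G) : Set G) := by
    rw [hPK]; exact S.hKn.trans (normalizer_le_pc K)
  have hPf : f ∈ normalizer (pc H : Set G) := normalizer_le_pc H S.hf
  have hZn : normalizer (pc H : Set G) ≤
      normalizer ((pc H ⊓ centralizer (pc H : Set G) : Subgroup G) : Set G) :=
    le_norm_inf le_rfl (normalizer_le_centralizer_normalizer _)
  by_cases hZ : pc H ⊓ centralizer (pc H : Set G) ≤ K
  · -- the centre of `pc H` lies in the kernel
    set Z := pc H ⊓ centralizer (pc H : Set G) with hZdef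
    set V : Subgroup G := sSup {A | ∃ g ∈ X, A = Z.map (MulAut.conj g).toMonoidHom} with hV
    have hZPK : Z ≤ pc H ⊓ K := le_inf inf_le_left hZ
    have hVP : V ≤ pc H ⊓ K := by
      apply sSup_le
      rintro _ ⟨g, hg, rfl⟩
      rw [← norm_map_eq (hPKn hg)]
      exact Subgroup.map_mono hZPK
    have hVc : V ≤ centralizer ((pc H ⊓ K : Subgroup G) : Set G) := by
      apply sSup_le
      rintro _ ⟨g, hg, rfl⟩
      rw [← norm_map_eq (normalizer_le_centralizer_normalizer _ (hPKn hg))]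
      exact Subgroup.map_mono (inf_le_right.trans (centralizer_le inf_le_left))
    have hVX : X ≤ normalizer (V : Set G) := by
      apply sSup_normalizer
      rintro g hg _ ⟨g', hg', rfl⟩
      refine ⟨g * g', mul_mem hg hg', ?_⟩
      rw [Subgroup.map_map]
      congr 1
      ext a
      simp [mul_assoc]
    have hZV : Z ≤ V := le_sSup ⟨1, one_mem _, by ext; simp⟩
    have hmax : ∃ A, MaxAb (pc H) A ∧ ¬ A ≤ K := by
      by_contra! hall
      obtain ⟨A, hA⟩ := exists_maxAb (pc H)
      have hJ : sSup {A | MaxAb (pc H) A} = ⊥ := by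
        apply S.cf
        · exact sSup_le fun A hA => hA.1.trans (pc_le H)
        · apply sSup_normalizer
          intro g hg A hA
          refine MaxAb.map hA ?_
          have h1 : A ≤ pc H ⊓ K := le_inf hA.1 (hall A hA)
          have h2 := Subgroup.map_mono (f := (MulAut.conj g).toMonoidHom) h1
          rw [norm_map_eq (hPKn hg)] at h2
          exact h2.trans inf_le_left
        · refine sSup_normalizer (normalizer (pc H : Set G)) _ ?_ hPf
          intro g hg A hA
          refine MaxAb.map hA ?_
          have h2 := Subgroup.map_mono (f := (MulAut.conj g).toMonoidHom) hA.1
          rwa [norm_map_eq hg] at h2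
      have hAbot : A = ⊥ := by
        rw [eq_bot_iff, ← hJ]; exact le_sSup hA
      apply hTK
      intro t ht
      have h1 := hA.2.2 (zpowers t) (by rw [zpowers_le]; exact hTP ht) (zpowers_abelian t)
      rw [hAbot, card_bot] at h1
      have h2 := eq_bot_of_card_le _ h1
      rw [zpowers_eq_bot] at h2
      rw [h2]; exact one_mem _
    obtain ⟨A, hA, hAK⟩ := hmax
    have hD := S.exists_five hα (pc_le H) (pc_p H) hVP hVc hVX hA hAK
    have hZbot : Z = ⊥ := by
      apply S.central (D := X ⊓ centralizer (V : Set G)) inf_le_left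
      · exact le_norm_inf le_normalizer (hVX.trans (normalizer_le_centralizer_normalizer _))
      · exact hD
      · exact inf_le_left.trans (pc_le H)
      · exact (pc_n H).trans hZn
      · exact hZn hPf
      · exact inf_le_right.trans (centralizer_le hZV)
    have hnt : Nontrivial (pc H) := by
      rw [nontrivial_iff_ne_bot]
      intro h0
      rw [h0] at hTP
      exact hT.2.1 (eq_bot_iff.2 hTP)
    have hcn := (pc_p H).center_nontrivial
    obtain ⟨⟨z, hz⟩, hz1⟩ := exists_ne (1 : center (pc H))
    have hzZ : (z : G) ∈ Z := by
      refine ⟨z.2, ?_⟩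
      refine mem_centralizer_iff.2 ?_
      intro w hw
      exact congrArg Subtype.val (mem_center_iff.1 hz ⟨w, hw⟩)
    rw [hZbot, mem_bot] at hzZ
    exact hz1 (Subtype.ext (Subtype.ext hzZ))
  · have hU : pc H ⊓ (K ⊓ K.map (MulAut.conj f).toMonoidHom) = ⊥ := by
      apply S.central (D := X ⊓ centralizer ((pc H ⊓ K : Subgroup G) : Set G)) inf_le_left
      · exact le_norm_inf le_normalizer (hPKn.trans (normalizer_le_centralizer_normalizer _))
      · intro hle
        apply hZ
        refine le_trans (le_inf (inf_le_left.trans ((pc_le H).trans S.hHX)) ?_) hle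
        exact inf_le_right.trans (centralizer_le inf_le_left)
      · exact inf_le_left.trans (pc_le H)
      · exact le_norm_inf (pc_n H) S.Q_norm
      · exact inf_normalizer_le_normalizer_inf ⟨hPf, S.fconj⟩
      · exact inf_le_right.trans (centralizer_le (inf_le_inf_left _ inf_le_left))
    have hbot : T0 ≤ ⊥ := by
      rw [← hU]; exact le_inf hT0P hT0Q
    exact hT0.2.1 (eq_bot_iff.2 hbot)

end Setup

end Small

section Bridge

open Subgroup Equiv

set_option maxRecDepth 100000 in
theorem perm5 (σ : Perm (Fin 5)) (h1 : σ ≠ 1) {k : ℕ} (hk : σ ^ 3 ^ k = 1) :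
    ∃ τ : Perm (Fin 5), σ * (τ * σ * τ⁻¹) ≠ 1 ∧ (σ * (τ * σ * τ⁻¹)) ^ 5 = 1 := by
  have ho : orderOf σ = 3 := by
    obtain ⟨j, _, hj⟩ := (Nat.dvd_prime_pow Nat.prime_three).1 (orderOf_dvd_of_pow_eq_one hk)
    have hd : orderOf σ ∣ 120 := by
      have h := orderOf_dvd_natCard σ
      rw [Nat.card_perm, Nat.card_fin] at h
      exact h
    rw [hj] at hd ⊢
    rcases j with _ | _ | j
    · exfalso; apply h1; rw [← orderOf_eq_one_iff, hj]; rfl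
    · rfl
    · exfalso
      have : 3 ^ 2 ∣ 120 := (pow_dvd_pow 3 (by omega)).trans hd
      norm_num at this
  have hc : σ.IsCycle := Perm.isCycle_of_prime_order' (by rw [ho]; exact Nat.prime_three)
    (by rw [ho]; decide)
  have hc0 : (swap 0 1 * swap 1 2 : Perm (Fin 5)).IsThreeCycle := by
    rw [← card_support_eq_three_iff]; decide
  have hconj : IsConj (swap 0 1 * swap 1 2 : Perm (Fin 5)) σ := by
    apply hc0.isCycle.isConj hc
    rw [← hc.orderOf, ho, hc0.card_support]
  obtain ⟨u, hu⟩ := isConj_iff.1 hconj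
  obtain ⟨τ, hτ1, hτ2⟩ : ∃ τ : Perm (Fin 5),
      (swap 0 1 * swap 1 2 : Perm (Fin 5)) * (τ * (swap 0 1 * swap 1 2) * τ⁻¹) ≠ 1 ∧
      ((swap 0 1 * swap 1 2 : Perm (Fin 5)) * (τ * (swap 0 1 * swap 1 2) * τ⁻¹)) ^ 5 = 1 :=
    ⟨swap 0 3 * swap 1 4, by decide, Equiv.ext (by decide)⟩
  set c : Perm (Fin 5) := swap 0 1 * swap 1 2
  have e : σ * ((u * τ * u⁻¹) * σ * (u * τ * u⁻¹)⁻¹) = u * (c * (τ * c * τ⁻¹)) * u⁻¹ := by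
    rw [← hu]; group
  refine ⟨u * τ * u⁻¹, ?_, ?_⟩
  · rw [e]
    intro h
    apply hτ1
    simpa using h
  · rw [e, conj_pow, hτ2]; simp

theorem alt_two_transitive {n : ℕ} (hn : 5 ≤ n) {a b : Fin n} (σ : Perm (Fin n)) :
    ∃ τ ∈ alternatingGroup (Fin n), τ a = σ a ∧ τ b = σ b := by
  rcases Int.units_eq_one_or (Perm.sign σ) with h | h
  · exact ⟨σ, h, rfl, rfl⟩
  · have : 1 < (({a, b} : Finset (Fin n))ᶜ).card := by
      rw [Finset.card_compl, Fintype.card_fin]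
      have := Finset.card_le_two (a := a) (b := b)
      omega
    obtain ⟨c, hc, d, hd, hcd⟩ := Finset.one_lt_card.1 this
    simp only [Finset.mem_compl, Finset.mem_insert, Finset.mem_singleton, not_or] at hc hd
    refine ⟨σ * swap c d, ?_, ?_, ?_⟩
    · rw [Perm.mem_alternatingGroup, Perm.sign_mul, h, Perm.sign_swap hcd]; rfl
    · rw [Perm.mul_apply, swap_apply_of_ne_of_ne (Ne.symm hc.1) (Ne.symm hd.1)]
    · rw [Perm.mul_apply, swap_apply_of_ne_of_ne (Ne.symm hc.2) (Ne.symm hd.2)]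

variable {G : Type*} [Group G]

theorem bridge [Finite G] {n : ℕ} (hn : n = 5 ∨ 7 ≤ n) {X H K : Subgroup G} {f : G}
    (φ : X →* Perm (Fin n)) (hφ : Function.Surjective φ) {a b : Fin n} (hab : a ≠ b)
    (hH : ∀ g, g ∈ H ↔ ∃ hg : g ∈ X, φ ⟨g, hg⟩ a = a ∧ φ ⟨g, hg⟩ b = b)
    (hK : ∀ g, g ∈ K ↔ ∃ hg : g ∈ X, φ ⟨g, hg⟩ = 1)
    (hf : f ∈ normalizer (H : Set G)) (ff : f * f ∈ H)
    (cf : ∀ M ≤ H, X ≤ normalizer (M : Set G) → f ∈ normalizer (M : Set G) → M = ⊥) :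
    K ⊓ K.map (MulAut.conj f).toMonoidHom = ⊥ := by
  have hn5 : 5 ≤ n := by omega
  have hHX : H ≤ X := fun g hg => ((hH g).1 hg).1
  have hKH : K ≤ H := by
    intro g hg
    obtain ⟨h1, h2⟩ := (hK g).1 hg
    exact (hH g).2 ⟨h1, by rw [h2]; rfl, by rw [h2]; rfl⟩
  have hpres : ∀ g : H, ∀ i, (i ≠ a ∧ i ≠ b) ↔
      (φ (inclusion hHX g) i ≠ a ∧ φ (inclusion hHX g) i ≠ b) := by
    intro g i
    obtain ⟨h1, h2, h3⟩ := (hH g).1 g.2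
    change φ (inclusion hHX g) a = a at h2
    change φ (inclusion hHX g) b = b at h3
    have e1 : φ (inclusion hHX g) i = a ↔ i = a := by
      constructor
      · intro h
        exact (φ (inclusion hHX g)).injective (h.trans h2.symm)
      · rintro rfl; exact h2
    have e2 : φ (inclusion hHX g) i = b ↔ i = b := by
      constructor
      · intro h
        exact (φ (inclusion hHX g)).injective (h.trans h3.symm)
      · rintro rfl; exact h3
    rw [Ne, Ne, Ne, Ne, e1, e2]
  let ψ : H →* Perm {i : Fin n // i ≠ a ∧ i ≠ b} := MonoidHom.mk'
    (fun g => (φ (inclusion hHX g)).subtypePerm (fun i => (hpres g i).symm)) (by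
      intro g g'
      ext i
      change ((φ (inclusion hHX g * inclusion hHX g') i : Fin n) : ℕ) = _
      rw [map_mul]
      rfl)
  have hψ : ∀ g i, ((ψ g i : {i : Fin n // i ≠ a ∧ i ≠ b}) : Fin n) =
    φ (inclusion hHX g) i := fun g i => rfl
  have hcard : Fintype.card {i : Fin n // i ≠ a ∧ i ≠ b} = n - 2 := by
    rw [Fintype.card_subtype]
    have : (Finset.univ.filter fun i : Fin n => i ≠ a ∧ i ≠ b) = ({a, b} : Finset (Fin n))ᶜ := by
      ext i; simp
    rw [this, Finset.card_compl, Fintype.card_fin, Finset.card_pair hab]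
  have S : Setup X H K f ψ := by
    refine ⟨hKH, hHX, ?_, hf, ff, cf, ?_, ?_, ?_, ?_⟩
    · rw [le_normalizer_iff]
      intro g hg k hk
      obtain ⟨h1, h2⟩ := (hK k).1 hk
      refine (hK _).2 ⟨mul_mem (mul_mem hg h1) (inv_mem hg), ?_⟩
      have e : (⟨g * k * g⁻¹, mul_mem (mul_mem hg h1) (inv_mem hg)⟩ : X) =
        ⟨g, hg⟩ * ⟨k, h1⟩ * ⟨g, hg⟩⁻¹ := rfl
      rw [e, map_mul, map_mul, h2, map_inv]; simp
    · intro τ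
      obtain ⟨⟨g, hg⟩, h⟩ := hφ (Perm.ofSubtype τ)
      have hgH : g ∈ H := (hH g).2 ⟨hg, by
        rw [h, Perm.ofSubtype_apply_of_not_mem]; simp, by
        rw [h, Perm.ofSubtype_apply_of_not_mem]; simp⟩
      refine ⟨⟨g, hgH⟩, ?_⟩
      ext i
      have := hψ ⟨g, hgH⟩ i
      change _ = φ ⟨g, hg⟩ i at this
      rw [this, h, Perm.ofSubtype_apply_coe]
    · intro h
      rw [hK]
      constructor
      · intro h1
        refine ⟨hHX h.2, ?_⟩
        ext i
        congr 1
        obtain ⟨_, h2, h3⟩ := (hH h).1 h.2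
        by_cases hi : i ≠ a ∧ i ≠ b
        · have := hψ h ⟨i, hi⟩
          rw [h1] at this
          exact this.symm
        · rw [not_and_or, not_not, not_not] at hi
          rcases hi with rfl | rfl
          · exact h2
          · exact h3
      · rintro ⟨h1, h2⟩
        ext i
        rw [hψ]
        have : φ (inclusion hHX h) = 1 := h2
        rw [this]; rfl
    · intro D hD hDn hDK g hg
      have hSN : SN ⊤ ((D.subgroupOf X).map φ) := by
        have h1 := ((SN.of_normal hD hDn).comap X.subtype).map φ
        have e : (X.comap X.subtype).map φ = ⊤ := by
          rw [show X.comap X.subtype = ⊤ from subgroupOf_self X]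
          rw [← MonoidHom.range_eq_map, MonoidHom.range_eq_top]; exact hφ
        rwa [e] at h1
      rcases sn_perm (Or.inr (by rwa [Fintype.card_fin])) hSN with h | h
      · exfalso
        apply hDK
        intro d hd
        have : φ ⟨d, hD hd⟩ ∈ (D.subgroupOf X).map φ := ⟨_, hd, rfl⟩
        rw [h, mem_bot] at this
        exact (hK d).2 ⟨_, this⟩
      · obtain ⟨τ, hτ, h1, h2⟩ := alt_two_transitive (a := a) (b := b) hn5 (φ ⟨g, hg⟩)
        obtain ⟨d, hd, rfl⟩ := h hτ
        refine ⟨d, hd, (hH _).2 ⟨mul_mem (inv_mem d.2) hg, ?_⟩⟩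
        have e : (⟨(d : G)⁻¹ * g, mul_mem (inv_mem d.2) hg⟩ : X) = d⁻¹ * ⟨g, hg⟩ := rfl
        rw [e, map_mul, map_inv, Perm.mul_apply, Perm.mul_apply, ← h1, ← h2]
        simp
    · intro h3 s hs hsK hk
      obtain ⟨k, hk⟩ := hk
      have : n = 5 := by omega
      subst this
      have hsX := hHX hs
      obtain ⟨τ, h1, h2⟩ := perm5 (φ ⟨s, hsX⟩) (fun h => hsK ((hK s).2 ⟨hsX, h⟩)) (k := k) (by
        rw [← map_pow]
        have : (⟨s, hsX⟩ : X) ^ 3 ^ k = 1 := Subtype.ext hk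
        rw [this, map_one])
      obtain ⟨h, rfl⟩ := hφ τ
      rw [← map_inv, ← map_mul, ← map_mul, ← map_mul] at h1 h2
      rw [← map_pow] at h2
      refine ⟨h, h.2, ?_, ?_⟩
      · intro hk
        obtain ⟨_, h3⟩ := (hK _).1 hk
        exact h1 h3
      · exact (hK _).2 ⟨_, h2⟩
  rcases hn with rfl | hn
  · exact S.small (by rw [hcard])
  · exact S.large (by rw [hcard]; omega)

end Bridge

/-- For `n = 5` or `n ≥ 7`, `L ≅ Sym(n)` acting on ordered pairs of distinct
elements of `{1,…,n}`, and any locally `L` pair `(Γ,G)`, the pointwise stabiliser of the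
ball of radius two around any vertex is trivial. -/
theorem stmt_1 {V : Type*} [Fintype V] (n : ℕ) (hn : n = 5 ∨ 7 ≤ n)
    (Γ : SimpleGraph V) (hconn : Γ.Connected)
    (G : Subgroup (Equiv.Perm V)) (hloc : IsLocallyOPairs n Γ G) (x : V) :
    ballStab Γ G x 2 = ⊥ := by
  obtain ⟨hadj, htrans, hL⟩ := hloc
  obtain ⟨e, φ, hφ, hact⟩ := hL x
  have hadj' : ∀ (g : G) (u v : V), Γ.Adj u v ↔ Γ.Adj (g • u) (g • v) :=
    fun g u v => hadj g g.2 u v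
  have hinv : ∀ (g : G) (u v : V), Γ.Adj (g⁻¹ • u) v ↔ Γ.Adj u (g • v) := by
    intro g u v
    rw [hadj' g, smul_inv_smul]
  let a : Fin n := ⟨0, by omega⟩
  let b : Fin n := ⟨1, by omega⟩
  have hab : a ≠ b := by simp [a, b]
  let y' : Γ.neighborSet x := e.symm ⟨(a, b), hab⟩
  have hxy : Γ.Adj x y' := y'.2
  have hact' : ∀ (g : stabilizer G x) (p : OPairs n),
      ((e.symm (φ g • p) : Γ.neighborSet x) : V) = g • ((e.symm p : Γ.neighborSet x) : V) := by
    intro g p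
    have := hact g (e.symm p)
    rwa [e.apply_symm_apply] at this
  -- local transitivity
  have hlt : ∀ v, Γ.Adj x v → ∃ g : G, g • x = x ∧ g • (y' : V) = v := by
    intro v hv
    obtain ⟨⟨⟨c, d⟩, hcd⟩, hp⟩ : ∃ p, p = e ⟨v, hv⟩ := ⟨_, rfl⟩
    change c ≠ d at hcd
    obtain ⟨σ, h1, h2⟩ : ∃ σ : Equiv.Perm (Fin n), σ a = c ∧ σ b = d := by
      refine ⟨Equiv.swap (Equiv.swap a c b) d * Equiv.swap a c, ?_, ?_⟩
      · rw [Equiv.Perm.mul_apply, Equiv.swap_apply_left]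
        refine Equiv.swap_apply_of_ne_of_ne ?_ hcd
        intro h
        apply hab
        apply (Equiv.swap a c).injective
        rw [Equiv.swap_apply_left]; exact h
      · rw [Equiv.Perm.mul_apply, Equiv.swap_apply_left]
    obtain ⟨g, rfl⟩ := hφ σ
    refine ⟨g, g.2, ?_⟩
    have h3 := hact' g ⟨(a, b), hab⟩
    have h4 : φ g • (⟨(a, b), hab⟩ : OPairs n) = e ⟨v, hv⟩ := by
      rw [← hp]
      exact Subtype.ext (Prod.ext h1 h2)
    rw [h4, e.symm_apply_apply] at h3
    exact h3.symm
  have hfix : ∀ g : stabilizer G x, g • (y' : V) = y' ↔ φ g a = a ∧ φ g b = b := by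
    intro g
    rw [← hact', Subtype.coe_inj, e.symm.injective.eq_iff]
    constructor
    · intro h
      have := congrArg Subtype.val h
      exact ⟨congrArg Prod.fst this, congrArg Prod.snd this⟩
    · rintro ⟨h1, h2⟩
      exact Subtype.ext (Prod.ext h1 h2)
  have hone : ∀ g : stabilizer G x, (∀ v, Γ.Adj x v → g • v = v) ↔ φ g = 1 := by
    intro g
    constructor
    · intro h
      ext i
      congr 1
      obtain ⟨j, hj⟩ : ∃ j : Fin n, i ≠ j := by
        by_cases hi : i = a
        · exact ⟨b, by rw [hi]; exact hab⟩
        · exact ⟨a, hi⟩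
      have h1 := hact' g ⟨(i, j), hj⟩
      have h2 : g • ((e.symm ⟨(i, j), hj⟩ : Γ.neighborSet x) : V) = _ := h _ (e.symm _).2
      rw [h2, Subtype.coe_inj, e.symm.injective.eq_iff] at h1
      exact congrArg (fun p : OPairs n => p.1.1) h1
    · intro h v hv
      have := hact g ⟨v, hv⟩
      rw [h, one_smul, e.symm_apply_apply] at this
      exact this.symm
  -- an element reversing the edge
  obtain ⟨f, hfx, hfy⟩ : ∃ f : G, f • x = y' ∧ f • (y' : V) = x := by
    obtain ⟨g, hg⟩ := htrans.exists_smul_eq x (y' : V)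
    obtain ⟨k, hk1, hk2⟩ := hlt (g⁻¹ • x) (by rw [Γ.adj_comm, hinv, hg]; exact hxy)
    exact ⟨g * k, by rw [mul_smul, hk1, hg], by rw [mul_smul, hk2, smul_inv_smul]⟩
  let X : Subgroup G := stabilizer G x
  let H : Subgroup G := stabilizer G x ⊓ stabilizer G (y' : V)
  let K : Subgroup G := φ.ker.map X.subtype
  have hH : ∀ g, g ∈ H ↔ ∃ hg : g ∈ X, φ ⟨g, hg⟩ a = a ∧ φ ⟨g, hg⟩ b = b := by
    intro g
    constructor
    · rintro ⟨h1, h2⟩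
      exact ⟨h1, (hfix ⟨g, h1⟩).1 h2⟩
    · rintro ⟨h1, h2⟩
      exact ⟨h1, (hfix ⟨g, h1⟩).2 h2⟩
  have hK : ∀ g, g ∈ K ↔ ∃ hg : g ∈ X, φ ⟨g, hg⟩ = 1 := by
    intro g
    constructor
    · rintro ⟨g', h1, rfl⟩
      exact ⟨g'.2, h1⟩
    · rintro ⟨h1, h2⟩
      exact ⟨⟨g, h1⟩, h2, rfl⟩
  have hfH : f ∈ Subgroup.normalizer (H : Set G) := by
    have hHf : ∀ h, h ∈ H ↔ h • x = x ∧ h • (y' : V) = y' := fun h => Iff.rfl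
    have hfx' : f⁻¹ • (y' : V) = x := by rw [inv_smul_eq_iff, hfx]
    have hfy' : f⁻¹ • x = (y' : V) := by rw [inv_smul_eq_iff, hfy]
    rw [Subgroup.mem_normalizer_iff]
    intro h
    rw [hHf, hHf]
    simp only [mul_smul, hfx', hfy']
    rw [smul_eq_iff_eq_inv_smul f, smul_eq_iff_eq_inv_smul f, hfx', hfy', and_comm]
  have hff : f * f ∈ H := by
    refine ⟨?_, ?_⟩
    · change (f * f) • x = x
      rw [mul_smul, hfx, hfy]
    · change (f * f) • (y' : V) = y'
      rw [mul_smul, hfy, hfx]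
  have cf : ∀ M ≤ H, X ≤ Subgroup.normalizer (M : Set G) →
      f ∈ Subgroup.normalizer (M : Set G) → M = ⊥ := by
    intro M hMH hMX hMf
    have hstep : ∀ u v, Γ.Adj u v → (∃ g ∈ Subgroup.normalizer (M : Set G), g • x = u) →
        ∃ g ∈ Subgroup.normalizer (M : Set G), g • x = v := by
      rintro _ v huv ⟨g, hg, rfl⟩
      obtain ⟨k, hk1, hk2⟩ := hlt (g⁻¹ • v) (by rw [Γ.adj_comm, hinv]; exact huv.symm)
      refine ⟨g * k * f, mul_mem (mul_mem hg (hMX hk1)) hMf, ?_⟩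
      rw [mul_smul, mul_smul, hfx, hk2, smul_inv_smul]
    have hall : ∀ v, ∃ g ∈ Subgroup.normalizer (M : Set G), g • x = v := by
      intro v
      obtain ⟨w⟩ := hconn.preconnected x v
      have : ∀ u v, Γ.Walk u v → (∃ g ∈ Subgroup.normalizer (M : Set G), g • x = u) →
        ∃ g ∈ Subgroup.normalizer (M : Set G), g • x = v := by
        intro u v w
        induction w with
        | nil => exact id
        | cons h _ ih => exact fun hu => ih (hstep _ _ h hu)
      exact this x v w ⟨1, one_mem _, one_smul _ _⟩
    rw [eq_bot_iff]
    intro m hm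
    rw [Subgroup.mem_bot]
    apply Subtype.ext
    ext v
    obtain ⟨g, hg, rfl⟩ := hall v
    have hm' : g⁻¹ * m * g ∈ M := (Subgroup.mem_normalizer_iff''.1 hg m).1 hm
    have : (g⁻¹ * m * g) • x = x := (hMH hm').1
    rw [mul_smul, mul_smul, inv_smul_eq_iff] at this
    exact this
  have hmain := bridge hn (X := X) (H := H) (K := K) φ hφ hab hH hK hfH hff cf
  rw [eq_bot_iff, ← hmain]
  intro g hg
  have hball : ∀ v, Γ.dist x v ≤ 2 → g • v = v := by
    intro v hv
    have := hg
    rw [ballStab, Subgroup.mem_iInf] at this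
    have := this v
    rw [Subgroup.mem_iInf] at this
    exact this hv
  refine ⟨?_, ?_⟩
  · have hgx : g ∈ X := hball x (by simp)
    refine (hK g).2 ⟨hgx, (hone ⟨g, hgx⟩).1 ?_⟩
    intro v hv
    exact hball v (by rw [SimpleGraph.dist_eq_one_iff_adj.2 hv]; norm_num)
  · have hfix2 : ∀ v, Γ.dist x (f • v) ≤ 2 → (f⁻¹ * g * f) • v = v := by
      intro v hv
      rw [mul_smul, mul_smul, inv_smul_eq_iff]
      exact hball _ hv
    have hgx : f⁻¹ * g * f ∈ X := hfix2 x (by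
      rw [hfx, SimpleGraph.dist_eq_one_iff_adj.2 hxy]; norm_num)
    refine ⟨f⁻¹ * g * f, (hK _).2 ⟨hgx, (hone ⟨_, hgx⟩).1 ?_⟩, by simp [mul_assoc]⟩
    intro v hv
    apply hfix2
    have h2 : Γ.Adj y' (f • v) := by rw [← hfx, ← hadj']; exact hv
    exact SimpleGraph.dist_le (SimpleGraph.Walk.cons hxy (SimpleGraph.Walk.cons h2 .nil))
end

section
/- Let n ≥ 4, let Sym(n) act on the set Ω of ordered pairs of distinct elements of {1,…,n}, let ω = (a,b) ∈ Ω, let L_ω be the stabiliser of ω, and let T_1, T_2 be the stabilisers in Sym(n) of the points a and b respectively. If p is a prime such that L_ω has a nontrivial normal p-subgroup, then n ∈ {4,5,6}, L_ω contains a Sylow p-subgroup of T_i for i = 1,2, and the subgroup ⟨O^p(T_1), O^p(T_2)⟩ is transitive on Ω. -/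
open MulAction Pointwise

/-- `O^p(H)`: the smallest normal subgroup of the finite group `H` whose quotient is a
`p`-group (for finite `H`, the quotient by a normal subgroup `N` is a `p`-group iff the
index of `N` is a power of `p`). -/
def pResidual (p : ℕ) (H : Type*) [Group H] : Subgroup H :=
  ⨅ N ∈ {N : Subgroup H | N.Normal ∧ ∃ k : ℕ, N.index = p ^ k}, N

theorem aux_mem_stab {n : ℕ} {a b : Fin n} (hab : a ≠ b) (g : Equiv.Perm (Fin n)) :
    g ∈ MulAction.stabilizer (Equiv.Perm (Fin n)) (⟨(a, b), hab⟩ : OPairs n) ↔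
      g a = a ∧ g b = b := by
  rw [MulAction.mem_stabilizer_iff]
  constructor
  · intro h
    have h' := congrArg Subtype.val h
    exact ⟨congrArg Prod.fst h', congrArg Prod.snd h'⟩
  · rintro ⟨h1, h2⟩
    exact Subtype.ext (Prod.ext h1 h2)

theorem aux_residual {p : ℕ} {H : Type*} [Group H] (g : H) (m : ℕ)
    (hm : Nat.Coprime m p) (hg : g ^ m = 1) : g ∈ pResidual p H := by
  unfold pResidual
  simp only [Subgroup.mem_iInf]
  rintro N ⟨hN, k, hk⟩
  have h1 : g ^ (p ^ k) ∈ N := by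
    rw [← hk]; exact N.pow_index_mem g
  have h2 : orderOf g ∣ m := orderOf_dvd_of_pow_eq_one hg
  have h3 : Nat.Coprime (p ^ k) (orderOf g) :=
    ((hm.coprime_dvd_left h2).pow_right k).symm
  obtain ⟨j, hj⟩ := exists_pow_eq_self_of_coprime h3
  rw [← hj]
  exact N.pow_mem h1 j

theorem aux_sylow {n p : ℕ} (hp : p.Prime) (c d : Fin n) (hcd : c ≠ d)
    (hmod : ¬ n ≡ 1 [MOD p]) :
    ∃ S : Sylow p ↥(MulAction.stabilizer (Equiv.Perm (Fin n)) c),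
      ∀ s ∈ (S : Subgroup ↥(MulAction.stabilizer (Equiv.Perm (Fin n)) c)),
        (s : Equiv.Perm (Fin n)) d = d := by
  classical
  haveI : Fact p.Prime := ⟨hp⟩
  obtain ⟨S⟩ : Nonempty (Sylow p ↥(MulAction.stabilizer (Equiv.Perm (Fin n)) c)) :=
    inferInstance
  have hfix := S.isPGroup'.card_modEq_card_fixedPoints (Fin n)
  rw [Nat.card_eq_fintype_card, Fintype.card_fin] at hfix
  have hc : c ∈ MulAction.fixedPoints S (Fin n) := fun s => s.1.2
  have : ∃ e ∈ MulAction.fixedPoints S (Fin n), e ≠ c := by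
    by_contra! hcon
    apply hmod
    have hs : MulAction.fixedPoints S (Fin n) = {c} := by
      ext x
      exact ⟨fun hx => hcon x hx, fun hx => by rw [Set.mem_singleton_iff] at hx; rw [hx]; exact hc⟩
    rw [hs] at hfix
    simpa using hfix
  obtain ⟨e, he, hec⟩ := this
  have hτ : Equiv.swap d e ∈ MulAction.stabilizer (Equiv.Perm (Fin n)) c :=
    Equiv.swap_apply_of_ne_of_ne hcd hec.symm
  refine ⟨(⟨Equiv.swap d e, hτ⟩ : MulAction.stabilizer (Equiv.Perm (Fin n)) c) • S, ?_⟩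
  intro s hs
  rw [Sylow.coe_subgroup_smul, Subgroup.mem_smul_pointwise_iff_exists] at hs
  obtain ⟨t, ht, rfl⟩ := hs
  have hte : (t : Equiv.Perm (Fin n)) e = e := he ⟨t, ht⟩
  show (Equiv.swap d e * (t : Equiv.Perm (Fin n)) * (Equiv.swap d e)⁻¹) d = d
  simp [Equiv.Perm.mul_apply, hte]

theorem aux_exists_ne {n : ℕ} (s : Finset (Fin n)) (h : s.card < n) : ∃ z, z ∉ s := by
  by_contra! hcon
  have : s = Finset.univ := by ext x; simp [hcon x]
  rw [this] at h
  simp at h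

theorem aux_three {α : Type*} [Fintype α] [DecidableEq α] (x y z : α) (hxy : x ≠ y) (hxz : x ≠ z)
    (hyz : y ≠ z) : (Equiv.swap x y * Equiv.swap y z) ^ 3 = 1 := by
  have h := (Equiv.Perm.isThreeCycle_swap_mul_swap_same hxy.symm hyz hxz).orderOf
  rw [Equiv.swap_comm x y, ← h]
  exact pow_orderOf_eq_one _

theorem aux_double {α : Type*} [DecidableEq α] (x y z w : α) (hxy : x ≠ y) (hxz : x ≠ z)
    (hyz : y ≠ z) (hwx : w ≠ x) (hwy : w ≠ y) (hwz : w ≠ z) :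
    (Equiv.swap y z * Equiv.swap x y) *
      (Equiv.swap z w * (Equiv.swap y z * Equiv.swap x y) * (Equiv.swap z w)⁻¹) =
      Equiv.swap x w * Equiv.swap y z := by
  ext v
  simp only [Equiv.swap_inv, Equiv.Perm.mul_apply, Equiv.swap_apply_def]
  grind

/-- `O^p` of a point stabiliser is transitive on the remaining points. -/
theorem aux_trans_one {n p : ℕ} (hn : 4 ≤ n) (hpp : p = 2 ∨ p = 3) (a x y : Fin n)
    (hx : x ≠ a) (hy : y ≠ a) :
    ∃ g ∈ (pResidual p ↥(MulAction.stabilizer (Equiv.Perm (Fin n)) a)).map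
            (MulAction.stabilizer (Equiv.Perm (Fin n)) a).subtype, g a = a ∧ g x = y := by
  by_cases hxy : x = y
  · exact ⟨1, one_mem _, rfl, hxy⟩
  rcases hpp with rfl | rfl
  · obtain ⟨z, hz⟩ := aux_exists_ne ({a, x, y} : Finset (Fin n))
      (lt_of_le_of_lt Finset.card_le_three (by omega))
    simp only [Finset.mem_insert, Finset.mem_singleton, not_or] at hz
    obtain ⟨hza, hzx, hzy⟩ := hz
    have hga : (Equiv.swap x y * Equiv.swap y z) a = a := by
      rw [Equiv.Perm.mul_apply, Equiv.swap_apply_of_ne_of_ne hy.symm (Ne.symm hza),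
        Equiv.swap_apply_of_ne_of_ne hx.symm hy.symm]
    refine ⟨Equiv.swap x y * Equiv.swap y z, ⟨⟨_, hga⟩, ?_, rfl⟩, hga, ?_⟩
    · apply aux_residual _ 3 (by norm_num)
      exact Subtype.ext (aux_three x y z hxy (Ne.symm hzx) (Ne.symm hzy))
    · rw [Equiv.Perm.mul_apply, Equiv.swap_apply_of_ne_of_ne hxy (Ne.symm hzx),
        Equiv.swap_apply_left]
  · have hga : (Equiv.swap x y) a = a := Equiv.swap_apply_of_ne_of_ne hx.symm hy.symm
    refine ⟨Equiv.swap x y, ⟨⟨_, hga⟩, ?_, rfl⟩, hga, Equiv.swap_apply_left _ _⟩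
    apply aux_residual _ 2 (by norm_num)
    apply Subtype.ext
    show (Equiv.swap x y) ^ 2 = 1
    rw [pow_two, Equiv.swap_mul_self]

theorem aux_to_base {n : ℕ} (hn : 4 ≤ n) (a b : Fin n) (hab : a ≠ b)
    (A B : Subgroup (Equiv.Perm (Fin n)))
    (hA : ∀ x y : Fin n, x ≠ a → y ≠ a → ∃ g ∈ A, g a = a ∧ g x = y)
    (hB : ∀ x y : Fin n, x ≠ b → y ≠ b → ∃ g ∈ B, g b = b ∧ g x = y)
    (x y : Fin n) (hxy : x ≠ y) : ∃ g ∈ A ⊔ B, g x = a ∧ g y = b := by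
  have key : ∀ x y : Fin n, x ≠ y → x ≠ b → ∃ g ∈ A ⊔ B, g x = a ∧ g y = b := by
    intro x y hxy hxb
    obtain ⟨g, hg, -, hgx⟩ := hB x a hxb hab
    have : g y ≠ a := fun h => hxy (g.injective (hgx.trans h.symm))
    obtain ⟨k, hk, hka, hky⟩ := hA (g y) b this hab.symm
    refine ⟨k * g, mul_mem (Subgroup.mem_sup_left hk) (Subgroup.mem_sup_right hg), ?_, ?_⟩
    · rw [Equiv.Perm.mul_apply, hgx, hka]
    · rw [Equiv.Perm.mul_apply, hky]
  by_cases hxb : x = b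
  · obtain ⟨c, hc⟩ := aux_exists_ne ({a, b} : Finset (Fin n))
      (lt_of_le_of_lt Finset.card_le_two (by omega))
    simp only [Finset.mem_insert, Finset.mem_singleton, not_or] at hc
    obtain ⟨g, hg, -, hgx⟩ := hA x c (by rw [hxb]; exact hab.symm) hc.1
    obtain ⟨k, hk, h1, h2⟩ := key (g x) (g y) (fun h => hxy (g.injective h))
      (by rw [hgx]; exact hc.2)
    exact ⟨k * g, mul_mem hk (Subgroup.mem_sup_left hg), h1, h2⟩
  · exact key x y hxy hxb

theorem aux_card5 {α : Type*} [DecidableEq α] (a b x y z : α) (h1 : a ∉ ({b, x, y, z} : Finset α))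
    (h2 : b ∉ ({x, y, z} : Finset α)) (h3 : x ∉ ({y, z} : Finset α)) (h4 : y ≠ z) :
    ({a, b, x, y, z} : Finset α).card = 5 := by
  rw [Finset.card_insert_of_notMem h1, Finset.card_insert_of_notMem h2,
    Finset.card_insert_of_notMem h3, Finset.card_pair h4]

/-- The arithmetic consequence of the existence of a nontrivial normal `p`-subgroup. -/
theorem aux_main {n p : ℕ} (hn : 4 ≤ n) (hp : p.Prime) (a b : Fin n) (hab : a ≠ b)
    (Q : Subgroup (Equiv.Perm (Fin n)))
    (hQa : ∀ g ∈ Q, g a = a) (hQb : ∀ g ∈ Q, g b = b)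
    (hQn : ∀ g ∈ Q, ∀ t : Equiv.Perm (Fin n), t a = a → t b = b → t * g * t⁻¹ ∈ Q)
    (hQp : ∀ g ∈ Q, ∃ k : ℕ, g ^ (p ^ k) = 1)
    (hQ1 : ∃ g ∈ Q, g ≠ 1) :
    (n = 5 ∧ p = 3) ∨ (p = 2 ∧ (n = 4 ∨ n = 6)) := by
  -- an element of prime order `q` of `Q` forces `p = q`
  have hprime : ∀ g ∈ Q, ∀ q : ℕ, q.Prime → g ^ q = 1 → g ≠ 1 → p = q := by
    intro g hg q hq hgq hg1
    obtain ⟨k, hk⟩ := hQp g hg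
    have ho : orderOf g = q := by
      haveI : Fact q.Prime := ⟨hq⟩
      exact orderOf_eq_prime hgq hg1
    have : q ∣ p ^ k := ho ▸ orderOf_dvd_of_pow_eq_one hk
    exact ((Nat.prime_dvd_prime_iff_eq hq hp).1 (hq.dvd_of_dvd_pow this)).symm
  -- commutators with transpositions
  have hcomm : ∀ g ∈ Q, ∀ x y : Fin n, x ≠ a → x ≠ b → y ≠ a → y ≠ b →
      Equiv.swap (g x) (g y) * Equiv.swap x y ∈ Q := by
    intro g hg x y hxa hxb hya hyb
    have h1 := hQn g⁻¹ (inv_mem hg) (Equiv.swap x y)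
      (Equiv.swap_apply_of_ne_of_ne hxa.symm hya.symm)
      (Equiv.swap_apply_of_ne_of_ne hxb.symm hyb.symm)
    have h2 := mul_mem hg h1
    have h3 : g * (Equiv.swap x y * g⁻¹ * (Equiv.swap x y)⁻¹) =
        Equiv.swap (g x) (g y) * Equiv.swap x y := by
      rw [Equiv.swap_inv, Equiv.swap_apply_apply]
      simp only [mul_assoc]
    rwa [h3] at h2
  have hxab : ∀ g ∈ Q, ∀ x, g x ≠ x → x ≠ a ∧ x ≠ b := by
    intro g hg x hx
    exact ⟨fun h => hx (by rw [h]; exact hQa g hg), fun h => hx (by rw [h]; exact hQb g hg)⟩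
  have himg : ∀ g ∈ Q, ∀ x, x ≠ a → x ≠ b → g x ≠ a ∧ g x ≠ b := by
    intro g hg x hxa hxb
    exact ⟨fun h => hxa (g.injective (h.trans (hQa g hg).symm)),
      fun h => hxb (g.injective (h.trans (hQb g hg).symm))⟩
  by_cases hsq : ∃ g ∈ Q, ∃ x, g (g x) ≠ x
  · left
    obtain ⟨g, hg, x, hgx2⟩ := hsq
    have hgx : g x ≠ x := fun h => hgx2 (by rw [h, h])
    obtain ⟨hxa, hxb⟩ := hxab g hg x hgx
    obtain ⟨hya, hyb⟩ := himg g hg x hxa hxb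
    obtain ⟨hza, hzb⟩ := himg g hg _ hya hyb
    have hc := hcomm g hg x (g x) hxa hxb hya hyb
    have hzy : g (g x) ≠ g x := fun h => hgx (g.injective h)
    generalize g (g x) = z at *
    generalize g x = y at *
    -- `c = (y z)(x y)` is a three-cycle in `Q`
    have hc3 : (Equiv.swap y z * Equiv.swap x y) ^ 3 = 1 := by
      have := aux_three z y x hzy hgx2 hgx
      rwa [Equiv.swap_comm z y, Equiv.swap_comm y x] at this
    have hcx : (Equiv.swap y z * Equiv.swap x y) x = z := by
      simp [Equiv.Perm.mul_apply]
    have hc1 : Equiv.swap y z * Equiv.swap x y ≠ 1 := by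
      intro h
      rw [h] at hcx
      exact hgx2 hcx.symm
    have hp3 := hprime _ hc 3 Nat.prime_three hc3 hc1
    refine ⟨?_, hp3⟩
    have hcard : ({a, b, x, y, z} : Finset (Fin n)).card = 5 := by
      apply aux_card5
      · simp [hab, hxa.symm, hya.symm, hza.symm]
      · simp [hxb.symm, hyb.symm, hzb.symm]
      · simp [hgx.symm, hgx2.symm]
      · exact hzy.symm
    have hle : 5 ≤ n := by
      have := Finset.card_le_univ ({a, b, x, y, z} : Finset (Fin n))
      rw [hcard] at this
      simpa using this
    by_contra hn5
    obtain ⟨w, hw⟩ := aux_exists_ne ({a, b, x, y, z} : Finset (Fin n)) (by omega)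
    simp only [Finset.mem_insert, Finset.mem_singleton, not_or] at hw
    obtain ⟨hwa, hwb, hwx, hwy, hwz⟩ := hw
    -- the product of `c` with a conjugate is a double transposition
    have ht := mul_mem hc (hQn _ hc (Equiv.swap z w)
      (Equiv.swap_apply_of_ne_of_ne hza.symm (Ne.symm hwa))
      (Equiv.swap_apply_of_ne_of_ne hzb.symm (Ne.symm hwb)))
    rw [aux_double x y z w hgx.symm hgx2.symm hzy.symm hwx hwy hwz] at ht
    have hp2 := hprime _ ht 2 Nat.prime_two ?_ ?_
    · omega
    · ext v
      simp only [pow_two, Equiv.Perm.mul_apply, Equiv.swap_apply_def, Equiv.Perm.one_apply]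
      clear * - hgx hgx2 hzy hwx hwy hwz
      grind
    · intro h
      have := congrArg (fun t : Equiv.Perm (Fin n) => t w) h
      simp [Equiv.Perm.mul_apply, Equiv.swap_apply_of_ne_of_ne hwy hwz] at this
      exact hwx this.symm
  · right
    push Not at hsq
    have hsq1 : ∀ g ∈ Q, g ^ 2 = 1 := by
      intro g hg
      ext x
      rw [pow_two, Equiv.Perm.mul_apply, hsq g hg x]; rfl
    obtain ⟨g, hg, hg1⟩ := hQ1
    refine ⟨hprime g hg 2 Nat.prime_two (hsq1 g hg) hg1, ?_⟩
    -- nontrivial elements have no further fixed points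
    have hfree : ∀ g ∈ Q, g ≠ 1 → ∀ y, y ≠ a → y ≠ b → g y ≠ y := by
      intro g hg hg1 y hya hyb hgy
      obtain ⟨x, hx⟩ : ∃ x, g x ≠ x := by
        by_contra! h
        exact hg1 (Equiv.ext h)
      obtain ⟨hxa, hxb⟩ := hxab g hg x hx
      have hc := hcomm g hg x y hxa hxb hya hyb
      have hxy : x ≠ y := fun h => hx (by rw [h, hgy])
      have hgxy : g x ≠ y := fun h => hxy (g.injective (h.trans hgy.symm))
      have := hsq _ hc x
      rw [hgy] at this
      simp only [Equiv.Perm.mul_apply, Equiv.swap_apply_def] at this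
      clear * - this hx hxy hgxy
      grind
    obtain ⟨x, hx⟩ : ∃ x, g x ≠ x := by
      by_contra! h
      exact hg1 (Equiv.ext h)
    obtain ⟨hxa, hxb⟩ := hxab g hg x hx
    obtain ⟨hga, hgb⟩ := himg g hg x hxa hxb
    by_contra hcon
    push Not at hcon
    obtain ⟨y, hy⟩ := aux_exists_ne ({a, b, x, g x} : Finset (Fin n))
      (lt_of_le_of_lt Finset.card_le_four (by omega))
    simp only [Finset.mem_insert, Finset.mem_singleton, not_or] at hy
    obtain ⟨hya, hyb, hyx, hygx⟩ := hy
    have hgy := hfree g hg hg1 y hya hyb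
    obtain ⟨hgya, hgyb⟩ := himg g hg y hya hyb
    have hgyx : g y ≠ x := fun h => hygx (by rw [← h, hsq g hg y])
    have hgyx' : g y ≠ g x := fun h => hyx (g.injective h)
    have hcard : ({a, b, x, g x, y, g y} : Finset (Fin n)).card = 6 := by
      rw [Finset.card_insert_of_notMem, aux_card5]
      · simp [hxb.symm, hgb.symm, Ne.symm hyb, hgyb.symm]
      · simp [hx.symm, Ne.symm hyx, hgyx.symm]
      · simp [Ne.symm hygx, hgyx'.symm]
      · exact hgy.symm
      · simp [hab, hxa.symm, hga.symm, Ne.symm hya, hgya.symm]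
    have hle : 6 ≤ n := by
      have := Finset.card_le_univ ({a, b, x, g x, y, g y} : Finset (Fin n))
      rw [hcard] at this
      simpa using this
    obtain ⟨z, hz⟩ := aux_exists_ne ({a, b, x, g x, y, g y} : Finset (Fin n)) (by omega)
    simp only [Finset.mem_insert, Finset.mem_singleton, not_or] at hz
    obtain ⟨hza, hzb, hzx, hzgx, hzy, hzgy⟩ := hz
    have hc := hcomm g hg x y hxa hxb hya hyb
    refine hfree _ hc ?_ z hza hzb ?_
    · intro h
      have := congrArg (fun t : Equiv.Perm (Fin n) => t x) h
      simp [Equiv.Perm.mul_apply, Equiv.swap_apply_of_ne_of_ne hygx hgy.symm] at this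
      exact hyx this
    · rw [Equiv.Perm.mul_apply, Equiv.swap_apply_of_ne_of_ne hzx hzy,
        Equiv.swap_apply_of_ne_of_ne hzgx hzgy]

/-- if the stabiliser `L_ω` of `ω = (a,b)` in `Sym(n)` acting on ordered
pairs of distinct elements has a nontrivial normal `p`-subgroup, then `n ∈ {4,5,6}`,
`L_ω` contains a Sylow `p`-subgroup of both point stabilisers `T₁ = Sym(n)_a`,
`T₂ = Sym(n)_b`, and `⟨O^p(T₁), O^p(T₂)⟩` is transitive on the ordered pairs. -/
theorem stmt_5 (n : ℕ) (hn : 4 ≤ n) (p : ℕ) (hp : p.Prime) (a b : Fin n) (hab : a ≠ b)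
    (hP : ∃ P : Subgroup ↥(MulAction.stabilizer (Equiv.Perm (Fin n)) (⟨(a, b), hab⟩ : OPairs n)),
      P ≠ ⊥ ∧ P.Normal ∧ IsPGroup p P) :
    n ∈ ({4, 5, 6} : Set ℕ) ∧
    (∃ S : Sylow p ↥(MulAction.stabilizer (Equiv.Perm (Fin n)) a),
      (S : Subgroup ↥(MulAction.stabilizer (Equiv.Perm (Fin n)) a)).map
          (MulAction.stabilizer (Equiv.Perm (Fin n)) a).subtype ≤
        MulAction.stabilizer (Equiv.Perm (Fin n)) (⟨(a, b), hab⟩ : OPairs n)) ∧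
    (∃ S : Sylow p ↥(MulAction.stabilizer (Equiv.Perm (Fin n)) b),
      (S : Subgroup ↥(MulAction.stabilizer (Equiv.Perm (Fin n)) b)).map
          (MulAction.stabilizer (Equiv.Perm (Fin n)) b).subtype ≤
        MulAction.stabilizer (Equiv.Perm (Fin n)) (⟨(a, b), hab⟩ : OPairs n)) ∧
    (∀ u w : OPairs n,
      ∃ g ∈ (pResidual p ↥(MulAction.stabilizer (Equiv.Perm (Fin n)) a)).map
            (MulAction.stabilizer (Equiv.Perm (Fin n)) a).subtype ⊔
          (pResidual p ↥(MulAction.stabilizer (Equiv.Perm (Fin n)) b)).map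
            (MulAction.stabilizer (Equiv.Perm (Fin n)) b).subtype,
        g • u = w) := by
  have hmain : (n = 5 ∧ p = 3) ∨ (p = 2 ∧ (n = 4 ∨ n = 6)) := by
    obtain ⟨P, hP1, hPn, hPp⟩ := hP
    refine aux_main hn hp a b hab (P.map (Subgroup.subtype _)) ?_ ?_ ?_ ?_ ?_
    · rintro _ ⟨g, _, rfl⟩
      exact ((aux_mem_stab hab _).1 g.2).1
    · rintro _ ⟨g, _, rfl⟩
      exact ((aux_mem_stab hab _).1 g.2).2
    · rintro _ ⟨g, hg, rfl⟩ t hta htb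
      exact ⟨_, hPn.conj_mem g hg ⟨t, (aux_mem_stab hab t).2 ⟨hta, htb⟩⟩, rfl⟩
    · rintro _ ⟨g, hg, rfl⟩
      obtain ⟨k, hk⟩ := hPp ⟨g, hg⟩
      refine ⟨k, ?_⟩
      have h1 : g ^ p ^ k = 1 := congrArg Subtype.val hk
      rw [← map_pow, h1, map_one]
    · obtain ⟨g, hg, hg1⟩ := P.bot_or_exists_ne_one.resolve_left hP1
      exact ⟨_, ⟨g, hg, rfl⟩, fun h => hg1 (Subtype.ext h)⟩
  have hmod : ¬ n ≡ 1 [MOD p] := by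
    rcases hmain with ⟨rfl, rfl⟩ | ⟨rfl, rfl | rfl⟩ <;> decide
  have hpp : p = 2 ∨ p = 3 := by omega
  refine ⟨?_, ?_, ?_, ?_⟩
  · simp only [Set.mem_insert_iff, Set.mem_singleton_iff]
    omega
  · obtain ⟨S, hS⟩ := aux_sylow hp a b hab hmod
    refine ⟨S, ?_⟩
    rintro _ ⟨s, hs, rfl⟩
    exact (aux_mem_stab hab _).2 ⟨s.2, hS s hs⟩
  · obtain ⟨S, hS⟩ := aux_sylow hp b a hab.symm hmod
    refine ⟨S, ?_⟩
    rintro _ ⟨s, hs, rfl⟩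
    exact (aux_mem_stab hab _).2 ⟨hS s hs, s.2⟩
  · intro u w
    have hbase := aux_to_base hn a b hab _ _ (aux_trans_one hn hpp a) (aux_trans_one hn hpp b)
    obtain ⟨g, hg, hg1, hg2⟩ := hbase u.1.1 u.1.2 u.2
    obtain ⟨k, hk, hk1, hk2⟩ := hbase w.1.1 w.1.2 w.2
    refine ⟨k⁻¹ * g, mul_mem (inv_mem hk) hg, Subtype.ext (Prod.ext ?_ ?_)⟩
    · show (k⁻¹ * g) u.1.1 = w.1.1
      rw [Equiv.Perm.mul_apply, hg1, Equiv.Perm.inv_eq_iff_eq, hk1]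
    · show (k⁻¹ * g) u.1.2 = w.1.2
      rw [Equiv.Perm.mul_apply, hg2, Equiv.Perm.inv_eq_iff_eq, hk2]
end

section
/- Let n ≥ 4, let L be the permutation group induced by Sym(n) on ordered pairs of distinct elements of {1,…,n}, let (Γ,G) be a locally L pair, and let {x,y} be an edge of Γ. If G_{xy}^{[1]} ≠ 1, then there is a prime p with (n,p) ∈ {(4,2),(5,3),(6,2)} such that G_{xy}^{[1]} is a p-group. -/
open MulAction Pointwise

/-- commuting with Alt -/
theorem P3 {α : Type*} [Fintype α] [DecidableEq α] (h4 : 4 ≤ Fintype.card α) (g : Equiv.Perm α)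
    (hg : ∀ a ∈ alternatingGroup α, g * a = a * g) : g = 1 := by
  ext c
  by_contra hc
  simp only [Equiv.Perm.coe_one, id_eq] at hc
  obtain ⟨e, he⟩ : ∃ e, e ∉ ({c, g c} : Finset α) := by
    by_contra! h
    have h1 : (Finset.univ : Finset α) ⊆ {c, g c} := fun i _ => h i
    have := Finset.card_le_card h1
    have h2 := Finset.card_le_two (a := c) (b := g c)
    rw [Finset.card_univ] at this; omega
  obtain ⟨f, hf⟩ : ∃ f, f ∉ ({c, g c, e} : Finset α) := by
    by_contra! h
    have h1 : (Finset.univ : Finset α) ⊆ {c, g c, e} := fun i _ => h i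
    have := Finset.card_le_card h1
    have h2 := Finset.card_le_three (a := c) (b := g c) (c := e)
    rw [Finset.card_univ] at this; omega
  simp at he hf
  have hm : Equiv.swap (g c) e * Equiv.swap e f ∈ alternatingGroup α := by
    rw [Equiv.Perm.mem_alternatingGroup, map_mul, Equiv.Perm.sign_swap (Ne.symm he.2),
      Equiv.Perm.sign_swap (Ne.symm hf.2.2)]; rfl
  have := congrArg (fun s : Equiv.Perm α => s c) (hg _ hm)
  simp only [Equiv.Perm.mul_apply] at this
  rw [Equiv.swap_apply_of_ne_of_ne (Ne.symm he.1) (Ne.symm hf.1),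
    Equiv.swap_apply_of_ne_of_ne (Ne.symm hc) (Ne.symm he.1),
    Equiv.swap_apply_of_ne_of_ne (Ne.symm he.2) (Ne.symm hf.2.1), Equiv.swap_apply_left] at this
  exact he.2 this.symm

theorem P2 {α : Type*} [Fintype α] [DecidableEq α] (h5 : 5 ≤ Fintype.card α)
    (B : Subgroup (Equiv.Perm α)) (hB : B ≠ ⊥)
    (hn : ∀ a ∈ alternatingGroup α, ∀ b ∈ B, a * b * a⁻¹ ∈ B) : alternatingGroup α ≤ B := by
  have hs : IsSimpleGroup (alternatingGroup α) :=
    alternatingGroup.isSimpleGroup (by rwa [Nat.card_eq_fintype_card])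
  have hN : (B.subgroupOf (alternatingGroup α)).Normal := by
    constructor
    intro b hb a
    rw [Subgroup.mem_subgroupOf] at *
    exact hn a a.2 _ hb
  rcases hN.eq_bot_or_eq_top with h | h
  · exfalso
    apply hB
    rw [Subgroup.subgroupOf_eq_bot, disjoint_iff] at h
    rw [eq_bot_iff]
    intro b hb
    rw [Subgroup.mem_bot]
    apply P3 (by omega)
    intro a ha
    have h1 : a * b * a⁻¹ * b⁻¹ ∈ B ⊓ alternatingGroup α := by
      refine Subgroup.mem_inf.2 ⟨B.mul_mem (hn a ha b hb) (B.inv_mem hb), ?_⟩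
      have : b * a⁻¹ * b⁻¹ ∈ alternatingGroup α :=
        (inferInstance : (alternatingGroup α).Normal).conj_mem _
          ((alternatingGroup α).inv_mem ha) b
      have := mul_mem ha this
      simpa [mul_assoc] using this
    rw [h, Subgroup.mem_bot] at h1
    have h2 : a * b = b * a := by
      calc a * b = (a * b * a⁻¹ * b⁻¹) * (b * a) := by group
        _ = b * a := by rw [h1, one_mul]
    exact h2.symm
  · rwa [Subgroup.subgroupOf_eq_top] at h

instance solv4 : Group.IsSolvable (Equiv.Perm (Fin 4)) := by
  have h1 : IsMulCommutative (commutator (alternatingGroup (Fin 4))) := by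
    rw [← alternatingGroup.kleinFour_eq_commutator (by simp)]
    have := alternatingGroup.kleinFour_isKleinFour (α := Fin 4) (by simp)
    exact ⟨⟨mul_comm_of_exponent_two this.exponent_two⟩⟩
  have h2 : Group.IsSolvable (alternatingGroup (Fin 4)) := by
    have : Group.IsSolvable (commutator (alternatingGroup (Fin 4))) :=
      Group.isSolvable_of_comm (fun a b => mul_comm' a b)
    exact Group.isSolvable_of_ker_le_range (commutator (alternatingGroup (Fin 4))).subtype
      (Abelianization.of) (by simp)
  exact Group.isSolvable_of_ker_le_range (alternatingGroup (Fin 4)).subtype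
      (Equiv.Perm.sign) (by rw [Subgroup.range_subtype, alternatingGroup_eq_sign_ker])

theorem solvle (m : ℕ) (hm : m ≤ 4) : Group.IsSolvable (Equiv.Perm (Fin m)) :=
  Group.isSolvable_of_isSolvable_injective (f := Equiv.Perm.viaEmbeddingHom (Fin.castLEEmb hm))
    (Equiv.Perm.viaEmbeddingHom_injective _)

theorem P1 (m : ℕ) (A : Subgroup (Equiv.Perm (Fin m))) (hA : ¬ Group.IsSolvable A)
    (hn : A.Normal) : 5 ≤ m ∧ alternatingGroup (Fin m) ≤ A := by
  have h5 : 5 ≤ m := by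
    by_contra h
    have := solvle m (by omega)
    exact hA inferInstance
  refine ⟨h5, P2 (by simpa using h5) A ?_ (fun a _ b hb => hn.conj_mem b hb a)⟩
  rintro rfl
  exact hA inferInstance

theorem three_mem_alt {α : Type*} [Fintype α] [DecidableEq α] (R : Subgroup (Equiv.Perm α))
    (hn : R.Normal) (s : Equiv.Perm α) (hs : s.IsThreeCycle) (hR : s ∈ R) :
    alternatingGroup α ≤ R := by
  rw [← Equiv.Perm.closure_three_cycles_eq_alternating, Subgroup.closure_le]
  intro u hu
  have : IsConj s u := by
    rw [Equiv.Perm.isConj_iff_cycleType_eq, hs.cycleType]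
    exact (Eq.symm hu)
  obtain ⟨c, hc⟩ := isConj_iff.1 this
  rw [← hc]
  exact hn.conj_mem _ hR c

theorem P5 (n : ℕ) (hn4 : 4 ≤ n) (R : Subgroup (Equiv.Perm (Fin n)))
    (hn : R.Normal) (r : Equiv.Perm (Fin n)) (hr : r ∈ R) (hr1 : r ≠ 1) (a : Fin n) (ha : r a = a)
    (z w : OPairs n) : ∃ g ∈ R, g • z = w := by
  have hA : alternatingGroup (Fin n) ≤ R := by
    obtain ⟨c, hc⟩ : ∃ c, r c ≠ c := by
      by_contra! h
      exact hr1 (Equiv.ext h)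
    have hac : a ≠ c := by rintro rfl; exact hc ha
    have h1 : r * (Equiv.swap a c * r⁻¹ * (Equiv.swap a c)⁻¹) ∈ R :=
      mul_mem hr (hn.conj_mem _ (inv_mem hr) _)
    have h2 : r * (Equiv.swap a c * r⁻¹ * (Equiv.swap a c)⁻¹)
        = Equiv.swap a (r c) * Equiv.swap a c := by
      have := Equiv.swap_apply_apply r a c
      rw [ha] at this
      rw [this, Equiv.swap_inv]; group
    rw [h2] at h1
    refine three_mem_alt R hn _ ?_ h1
    apply Equiv.Perm.isThreeCycle_swap_mul_swap_same
    · intro h; apply hac; apply r.injective; rw [ha, ← h]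
    · exact hac
    · exact hc
  obtain ⟨⟨z1, z2⟩, hz⟩ := z
  obtain ⟨⟨w1, w2⟩, hw⟩ := w
  simp only [ne_eq] at hz hw
  obtain ⟨s, hs1, hs2⟩ : ∃ s : Equiv.Perm (Fin n), s z1 = w1 ∧ s z2 = w2 := by
    refine ⟨Equiv.swap (Equiv.swap z1 w1 z2) w2 * Equiv.swap z1 w1, ?_, ?_⟩
    · rw [Equiv.Perm.mul_apply, Equiv.swap_apply_left, Equiv.swap_apply_of_ne_of_ne _ hw]
      intro h
      have h2 : Equiv.swap z1 w1 z1 = Equiv.swap z1 w1 z2 := by rw [Equiv.swap_apply_left, ← h]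
      exact hz (Equiv.injective _ h2)
    · rw [Equiv.Perm.mul_apply, Equiv.swap_apply_left]
  obtain ⟨e, he⟩ : ∃ e, e ∉ ({z1, z2} : Finset (Fin n)) := by
    by_contra! h
    have h1 : (Finset.univ : Finset (Fin n)) ⊆ {z1, z2} := fun i _ => h i
    have := Finset.card_le_card h1
    have h2 := Finset.card_le_two (a := z1) (b := z2)
    rw [Finset.card_univ, Fintype.card_fin] at this; omega
  obtain ⟨f, hf⟩ : ∃ f, f ∉ ({z1, z2, e} : Finset (Fin n)) := by
    by_contra! h
    have h1 : (Finset.univ : Finset (Fin n)) ⊆ {z1, z2, e} := fun i _ => h i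
    have := Finset.card_le_card h1
    have h2 := Finset.card_le_three (a := z1) (b := z2) (c := e)
    rw [Finset.card_univ, Fintype.card_fin] at this; omega
  simp at he hf
  rcases Int.units_eq_one_or (Equiv.Perm.sign s) with h | h
  · exact ⟨s, hA h, Subtype.ext (Prod.ext hs1 hs2)⟩
  · refine ⟨s * Equiv.swap e f, hA ?_, Subtype.ext (Prod.ext ?_ ?_)⟩
    · rw [Equiv.Perm.mem_alternatingGroup, map_mul, h, Equiv.Perm.sign_swap (Ne.symm hf.2.2)]; rfl
    · change s (Equiv.swap e f z1) = w1
      rw [Equiv.swap_apply_of_ne_of_ne (Ne.symm he.1) (Ne.symm hf.1), hs1]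
    · change s (Equiv.swap e f z2) = w2
      rw [Equiv.swap_apply_of_ne_of_ne (Ne.symm he.2) (Ne.symm hf.2.1), hs2]

set_option maxRecDepth 100000 in
theorem dec3 : ∀ g : Equiv.Perm (Fin 3), g ^ 2 = 1 → g ≠ 1 →
    ∃ h, (g * (h * g * h⁻¹)) ^ 3 = 1 ∧ g * (h * g * h⁻¹) ≠ 1 := by decide

set_option maxRecDepth 100000 in
theorem dec4 : ∀ g : Equiv.Perm (Fin 4), g ^ 3 = 1 → g ≠ 1 →
    ∃ h, (g * (h * g * h⁻¹)) ^ 2 = 1 ∧ g * (h * g * h⁻¹) ≠ 1 := by decide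

/-- in a `p`-group an element killed by a power coprime to `p` is trivial -/
theorem pgroup_coprime {G : Type*} [Group G] {p q : ℕ} (hp : p.Prime) (hq : q.Prime) (hpq : p ≠ q)
    (P : Subgroup G) (hP : IsPGroup p P) (g : G) (hg : g ∈ P) (h : g ^ q = 1) : g = 1 := by
  obtain ⟨k, hk⟩ := hP ⟨g, hg⟩
  have hk' : g ^ p ^ k = 1 := by simpa [Subtype.ext_iff] using hk
  have h1 := orderOf_dvd_of_pow_eq_one h
  have h2 := orderOf_dvd_of_pow_eq_one hk'
  have h3 : Nat.Coprime q (p ^ k) := Nat.Coprime.pow_right _ ((Nat.coprime_primes hq hp).2 hpq.symm)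
  have := Nat.dvd_gcd h1 h2
  rw [h3] at this
  exact orderOf_eq_one_iff.1 (Nat.dvd_one.1 this)

theorem P4 (m p : ℕ) (hm : 2 ≤ m) (hp : p.Prime) (P : Subgroup (Equiv.Perm (Fin m)))
    (hP : IsPGroup p P) (hn : P.Normal) (h1 : P ≠ ⊥) :
    (m = 2 ∧ p = 2) ∨ (m = 3 ∧ p = 3) ∨ (m = 4 ∧ p = 2) := by
  have hF : Fact p.Prime := ⟨hp⟩
  by_cases h5 : 5 ≤ m
  · exfalso
    have hA := P2 (by simpa using h5) P h1 (fun a _ b hb => hn.conj_mem b hb a)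
    have hAp : IsPGroup p (alternatingGroup (Fin m)) := hP.to_le hA
    let i : Fin 5 → Fin m := Fin.castLE h5
    have hi : Function.Injective i := Fin.castLE_injective h5
    have e1 : (Equiv.swap (i 0) (i 1) * Equiv.swap (i 2) (i 3)) ∈ alternatingGroup (Fin m) := by
      rw [Equiv.Perm.mem_alternatingGroup, map_mul, Equiv.Perm.sign_swap (hi.ne (by decide)),
        Equiv.Perm.sign_swap (hi.ne (by decide))]; rfl
    have h3 : (Equiv.swap (i 0) (i 1) * Equiv.swap (i 0) (i 2)).IsThreeCycle :=
      Equiv.Perm.isThreeCycle_swap_mul_swap_same (hi.ne (by decide)) (hi.ne (by decide))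
        (hi.ne (by decide))
    by_cases h2 : p = 2
    · have := pgroup_coprime hp Nat.prime_three (by omega) P hP _ (hA h3.mem_alternatingGroup)
        (by rw [← h3.orderOf]; exact pow_orderOf_eq_one _)
      have h4 := h3.orderOf
      rw [this, orderOf_one] at h4
      omega
    · have := pgroup_coprime hp Nat.prime_two h2 P hP _ (hA e1) (by
        have hc : Commute (Equiv.swap (i 0) (i 1)) (Equiv.swap (i 2) (i 3)) := by
          apply Equiv.Perm.Disjoint.commute
          rw [Equiv.Perm.disjoint_iff_disjoint_support, Equiv.Perm.support_swap (hi.ne (by decide)),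
            Equiv.Perm.support_swap (hi.ne (by decide))]
          simp [hi.eq_iff]
        rw [hc.mul_pow, sq, sq, Equiv.swap_mul_self, Equiv.swap_mul_self, one_mul])
      have h4 := congrArg (fun s : Equiv.Perm (Fin m) => s (i 0)) this
      simp only [Equiv.Perm.mul_apply] at h4
      rw [Equiv.swap_apply_of_ne_of_ne (hi.ne (by decide)) (hi.ne (by decide)),
        Equiv.swap_apply_left] at h4
      exact absurd (hi h4) (by decide)
  · have hpm : p ∣ m.factorial := by
      have h2 : p ∣ Nat.card P := (hP.card_eq_or_dvd).resolve_left (by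
        rwa [Subgroup.card_eq_one])
      have := h2.trans P.card_subgroup_dvd_card
      rwa [Nat.card_perm, Nat.card_fin] at this
    have hpm' := (hp.dvd_factorial).1 hpm
    have hp2 := hp.two_le
    have hord : ∃ g ∈ P, g ≠ 1 ∧ g ^ p = 1 := by
      have h2 : p ∣ Nat.card P := (hP.card_eq_or_dvd).resolve_left (by
        rwa [Subgroup.card_eq_one])
      obtain ⟨g, hg⟩ := exists_prime_orderOf_dvd_card' p h2
      refine ⟨g, g.2, ?_, ?_⟩
      · intro h
        have : g = 1 := Subtype.ext h
        rw [this, orderOf_one] at hg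
        omega
      · have := pow_orderOf_eq_one g
        rw [hg] at this
        simpa [Subtype.ext_iff] using this
    obtain ⟨g, hg, hg1, hgp⟩ := hord
    have h4 : p ≠ 4 := by rintro rfl; revert hp; decide
    have : m = 2 ∨ m = 3 ∨ m = 4 := by omega
    rcases this with rfl | rfl | rfl
    · left; omega
    · by_cases h : p = 3
      · simp [h]
      · have : p = 2 := by omega
        subst this
        obtain ⟨h, ha, hb⟩ := dec3 g hgp hg1
        exact absurd (pgroup_coprime hp Nat.prime_three (by omega) P hP _
          (mul_mem hg (hn.conj_mem _ hg h)) ha) hb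
    · by_cases h : p = 2
      · simp [h]
      · have : p = 3 := by omega
        subst this
        obtain ⟨h, ha, hb⟩ := dec4 g hgp hg1
        exact absurd (pgroup_coprime hp Nat.prime_two (by omega) P hP _
          (mul_mem hg (hn.conj_mem _ hg h)) ha) hb

section Grp
variable {G : Type*} [Group G]

/-- The conjugate `g H g⁻¹`. -/
def cj (g : G) (H : Subgroup G) : Subgroup G := H.map (MulAut.conj g).toMonoidHom

theorem mem_cj (g x : G) (H : Subgroup G) : x ∈ cj g H ↔ g⁻¹ * x * g ∈ H := by
  unfold cj
  rw [Subgroup.mem_map_equiv]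
  simp [MulAut.conj_symm_apply]

theorem conj_mem_cj (g x : G) (H : Subgroup G) : g * x * g⁻¹ ∈ cj g H ↔ x ∈ H := by
  rw [mem_cj]; simp [mul_assoc]

theorem cj_cj (g h : G) (H : Subgroup G) : cj g (cj h H) = cj (g * h) H := by
  ext x; simp [mem_cj, mul_assoc]

theorem cj_one (H : Subgroup G) : cj 1 H = H := by
  ext x; simp [mem_cj]

theorem cj_inf (g : G) (H L : Subgroup G) : cj g (H ⊓ L) = cj g H ⊓ cj g L := by
  ext x; simp [mem_cj, Subgroup.mem_inf]

theorem cj_bot (g : G) : cj g (⊥ : Subgroup G) = ⊥ := by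
  unfold cj; simp

theorem cj_mono (g : G) {H L : Subgroup G} (h : H ≤ L) : cj g H ≤ cj g L :=
  Subgroup.map_mono h

theorem cj_inv_cj (g : G) (H : Subgroup G) : cj g⁻¹ (cj g H) = H := by
  rw [cj_cj, inv_mul_cancel, cj_one]

theorem cj_cj_inv (g : G) (H : Subgroup G) : cj g (cj g⁻¹ H) = H := by
  rw [cj_cj, mul_inv_cancel, cj_one]

/-- A subgroup-valued construction is equivariant once half-equivariant. -/
theorem equivar (F : Subgroup G → Subgroup G) (h : ∀ g H, cj g (F H) ≤ F (cj g H)) (g : G)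
    (H : Subgroup G) : F (cj g H) = cj g (F H) := by
  apply le_antisymm _ (h g H)
  have := cj_mono g (h g⁻¹ (cj g H))
  rwa [cj_inv_cj, cj_cj_inv] at this

/-- `H` normalises `M`. -/
def Nz (H M : Subgroup G) : Prop := ∀ h ∈ H, ∀ m ∈ M, h * m * h⁻¹ ∈ M

theorem Nz.cj_eq {H M : Subgroup G} (h : Nz H M) (g : G) (hg : g ∈ H) : cj g M = M := by
  ext x
  rw [mem_cj]
  constructor
  · intro hx
    have := h g hg _ hx
    simpa [mul_assoc] using this
  · intro hx
    have := h _ (inv_mem hg) _ hx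
    simpa using this

theorem Nz.of_cj {H M : Subgroup G} (h : ∀ g ∈ H, cj g M = M) : Nz H M := by
  intro g hg m hm
  rw [← h g hg, conj_mem_cj]; exact hm

theorem Nz.cj {H M : Subgroup G} (h : Nz H M) (g : G) : Nz (cj g H) (cj g M) := by
  intro x hx m hm
  rw [mem_cj] at *
  have := h _ hx _ hm
  simpa [mul_assoc] using this

theorem Nz.mono {H H' M : Subgroup G} (h : Nz H M) (hh : H' ≤ H) : Nz H' M :=
  fun g hg => h g (hh hg)

theorem Nz.inf {H M M' : Subgroup G} (h : Nz H M) (h' : Nz H M') : Nz H (M ⊓ M') := by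
  intro g hg m hm
  rw [Subgroup.mem_inf] at *
  exact ⟨h g hg m hm.1, h' g hg m hm.2⟩

theorem Nz.self (H : Subgroup G) : Nz H H :=
  fun _ hg _ hm => mul_mem (mul_mem hg hm) (inv_mem hg)

/-- Two subgroups normalising each other and meeting trivially commute. -/
theorem comm_of_disj {A B : Subgroup G} (hAB : Nz A B) (hBA : Nz B A) (h : A ⊓ B = ⊥)
    (a : G) (ha : a ∈ A) (b : G) (hb : b ∈ B) : a * b = b * a := by
  have h1 : a * b * a⁻¹ * b⁻¹ ∈ A ⊓ B := by
    refine Subgroup.mem_inf.2 ⟨?_, mul_mem (hAB a ha b hb) (inv_mem hb)⟩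
    have := mul_mem ha (hBA b hb _ (inv_mem ha))
    simpa [mul_assoc] using this
  rw [h, Subgroup.mem_bot] at h1
  calc a * b = (a * b * a⁻¹ * b⁻¹) * (b * a) := by group
    _ = b * a := by rw [h1, one_mul]

/-- `C_H(M)` -/
def ct (H M : Subgroup G) : Subgroup G := H ⊓ Subgroup.centralizer (M : Set G)

theorem mem_ct {H M : Subgroup G} {x : G} : x ∈ ct H M ↔ x ∈ H ∧ ∀ m ∈ M, x * m = m * x := by
  unfold ct
  rw [Subgroup.mem_inf, Subgroup.mem_centralizer_iff]
  simp only [SetLike.mem_coe]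
  constructor
  · rintro ⟨h1, h2⟩; exact ⟨h1, fun m hm => (h2 m hm).symm⟩
  · rintro ⟨h1, h2⟩; exact ⟨h1, fun m hm => (h2 m hm).symm⟩

theorem cj_ct (g : G) (H M : Subgroup G) : cj g (ct H M) = ct (cj g H) (cj g M) := by
  ext x
  rw [mem_cj, mem_ct, mem_ct, mem_cj]
  refine and_congr_right fun _ => ⟨fun h m hm => ?_, fun h m hm => ?_⟩
  · have h1 := h _ ((mem_cj _ _ _).1 hm)
    have h2 : g * (g⁻¹ * x * g * (g⁻¹ * m * g)) * g⁻¹ = g * (g⁻¹ * m * g * (g⁻¹ * x * g)) * g⁻¹ := by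
      rw [h1]
    simpa [mul_assoc] using h2
  · have h1 := h _ ((conj_mem_cj g m M).2 hm)
    have h2 : g⁻¹ * (x * (g * m * g⁻¹)) * g = g⁻¹ * ((g * m * g⁻¹) * x) * g := by rw [h1]
    simpa [mul_assoc] using h2

theorem Nz.ct {S H M : Subgroup G} (h : Nz S H) (h' : Nz S M) : Nz S (ct H M) := by
  apply Nz.of_cj
  intro g hg
  rw [cj_ct, h.cj_eq g hg, h'.cj_eq g hg]

/-- `M` is a normal `p`-subgroup of `H`. -/
def pn (p : ℕ) (H M : Subgroup G) : Prop := M ≤ H ∧ Nz H M ∧ IsPGroup p M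

theorem pn_sup {p : ℕ} {H M L : Subgroup G} (h1 : pn p H M) (h2 : pn p H L) : pn p H (M ⊔ L) := by
  refine ⟨sup_le h1.1 h2.1, ?_, ?_⟩
  · apply Nz.of_cj
    intro g hg
    have e1 := h1.2.1.cj_eq g hg
    have e2 := h2.2.1.cj_eq g hg
    unfold cj at *
    rw [Subgroup.map_sup, e1, e2]
  · apply IsPGroup.to_sup_of_normal_right' h1.2.2 h2.2.2
    rw [Subgroup.le_normalizer_iff]
    exact fun h hh k hk => h2.2.1 h (h1.1 hh) k hk

theorem pn_bot (p : ℕ) (H : Subgroup G) : pn p H ⊥ := by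
  refine ⟨bot_le, ?_, IsPGroup.of_bot⟩
  intro g _ m hm
  rw [Subgroup.mem_bot] at *
  simp [hm]

/-- `O_p(H)` -/
def Op (p : ℕ) (H : Subgroup G) : Subgroup G where
  carrier := {x | ∃ M, pn p H M ∧ x ∈ M}
  one_mem' := ⟨⊥, pn_bot p H, one_mem _⟩
  mul_mem' := by
    rintro a b ⟨M, hM, ha⟩ ⟨L, hL, hb⟩
    exact ⟨M ⊔ L, pn_sup hM hL, mul_mem ((le_sup_left : M ≤ M ⊔ L) ha)
      ((le_sup_right : L ≤ M ⊔ L) hb)⟩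
  inv_mem' := by
    rintro a ⟨M, hM, ha⟩
    exact ⟨M, hM, inv_mem ha⟩

theorem mem_Op {p : ℕ} {H : Subgroup G} {x : G} : x ∈ Op p H ↔ ∃ M, pn p H M ∧ x ∈ M := Iff.rfl

theorem le_Op {p : ℕ} {H M : Subgroup G} (h : pn p H M) : M ≤ Op p H := fun _ hx => ⟨M, h, hx⟩

theorem Op_pn (p : ℕ) (H : Subgroup G) : pn p H (Op p H) := by
  refine ⟨?_, ?_, ?_⟩
  · rintro x ⟨M, hM, hx⟩; exact hM.1 hx
  · rintro g hg x ⟨M, hM, hx⟩; exact ⟨M, hM, hM.2.1 g hg x hx⟩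
  · rintro ⟨x, M, hM, hx⟩
    obtain ⟨k, hk⟩ := hM.2.2 ⟨x, hx⟩
    refine ⟨k, ?_⟩
    simpa [Subtype.ext_iff] using hk

theorem cj_Op (p : ℕ) (g : G) (H : Subgroup G) : Op p (cj g H) = cj g (Op p H) := by
  apply equivar (Op p)
  intro g H x hx
  rw [mem_cj] at hx
  obtain ⟨M, hM, hx⟩ := hx
  refine ⟨cj g M, ⟨cj_mono g hM.1, hM.2.1.cj g, hM.2.2.map _⟩, ?_⟩
  rwa [mem_cj]

/-- `O^p(H)` -/
def Up (p : ℕ) (H : Subgroup G) : Subgroup G :=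
  Subgroup.closure {x | x ∈ H ∧ (orderOf x).Coprime p}

theorem Up_le (p : ℕ) (H : Subgroup G) : Up p H ≤ H :=
  (Subgroup.closure_le _).2 fun _ hx => hx.1

theorem cj_Up (p : ℕ) (g : G) (H : Subgroup G) : Up p (cj g H) = cj g (Up p H) := by
  apply equivar (Up p)
  intro g H
  unfold cj
  unfold Up
  rw [MonoidHom.map_closure, Subgroup.closure_le]
  rintro _ ⟨x, hx, rfl⟩
  apply Subgroup.subset_closure
  refine ⟨Subgroup.mem_map_of_mem _ hx.1, ?_⟩
  have : orderOf ((MulAut.conj g).toMonoidHom x) = orderOf x :=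
    orderOf_injective _ (MulAut.conj g).injective x
  rw [this]; exact hx.2

/-- if `Q` is a `p`-group normalising `X` then the elements of order coprime to `p` of `XQ` are in `X` -/
theorem mem_of_coprime [Finite G] {p : ℕ} (X Q : Subgroup G) (hQ : IsPGroup p Q) [Fact p.Prime]
    (hQX : Nz Q X) (u q : G) (hu : u ∈ X) (hq : q ∈ Q) (hc : (orderOf (q * u)).Coprime p) :
    q * u ∈ X := by
  have key : ∀ k : ℕ, ∃ v ∈ X, (q * u) ^ k = q ^ k * v := by
    intro k
    induction k with
    | zero => exact ⟨1, one_mem _, by simp⟩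
    | succ k ih =>
      obtain ⟨v, hv, h⟩ := ih
      have h1 := hQX _ (inv_mem hq) v hv
      refine ⟨q⁻¹ * v * q * u, mul_mem (by simpa using h1) hu, ?_⟩
      rw [pow_succ, h, pow_succ]; group
  obtain ⟨k, hk⟩ := hQ ⟨q, hq⟩
  have hk' : q ^ p ^ k = 1 := by simpa [Subtype.ext_iff] using hk
  obtain ⟨v, hv, h⟩ := key (p ^ k)
  rw [hk', one_mul] at h
  have hcop : (orderOf (q * u)).Coprime (p ^ k) := Nat.Coprime.pow_right k hc
  obtain ⟨m, hm⟩ := exists_pow_eq_self_of_coprime hcop.symm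
  rw [← hm, h]
  exact pow_mem hv m

theorem pgroup_of_Up [Finite G] {p : ℕ} (hp : p.Prime) (H : Subgroup G) (h : Up p H = ⊥) :
    IsPGroup p H := by
  rintro ⟨x, hx⟩
  obtain ⟨k, m, hm, he⟩ := Nat.exists_eq_pow_mul_and_not_dvd (orderOf_pos x).ne' p hp.ne_one
  refine ⟨k, ?_⟩
  have h1 : x ^ p ^ k ∈ Up p H := by
    apply Subgroup.subset_closure
    refine ⟨pow_mem hx _, ?_⟩
    have : orderOf (x ^ p ^ k) = m := by
      rw [orderOf_pow_of_dvd (pow_pos hp.pos k).ne' ⟨m, he⟩, he]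
      exact Nat.mul_div_cancel_left m (pow_pos hp.pos k)
    rw [this]
    exact ((Nat.Prime.coprime_iff_not_dvd hp).2 hm).symm
  rw [h, Subgroup.mem_bot] at h1
  exact Subtype.ext (by simpa using h1)

/-- no nontrivial abelian normal subgroups -/
theorem abel_triv [Finite G] {H : Subgroup G} (hH : ∀ p : ℕ, p.Prime → Op p H = ⊥) (A : Subgroup G)
    (hA : A ≤ H) (hn : Nz H A) (hc : ∀ a ∈ A, ∀ b ∈ A, a * b = b * a) : A = ⊥ := by
  by_contra hne
  obtain ⟨p, hp, hd⟩ := Nat.exists_prime_and_dvd (n := Nat.card A)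
    (by rwa [ne_eq, Subgroup.card_eq_one])
  have hF : Fact p.Prime := ⟨hp⟩
  obtain ⟨g, hg⟩ := exists_prime_orderOf_dvd_card' p hd
  let T : Subgroup G :=
    { carrier := {x | x ∈ A ∧ x ^ p = 1}
      one_mem' := ⟨one_mem _, one_pow _⟩
      mul_mem' := by
        rintro a b ⟨ha, ha'⟩ ⟨hb, hb'⟩
        refine ⟨mul_mem ha hb, ?_⟩
        rw [Commute.mul_pow (hc a ha b hb), ha', hb', one_mul]
      inv_mem' := by
        rintro a ⟨ha, ha'⟩
        exact ⟨inv_mem ha, by rw [inv_pow, ha', inv_one]⟩ }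
  have hT : pn p H T := by
    refine ⟨fun x hx => hA hx.1, ?_, ?_⟩
    · rintro h hh x ⟨hx, hx'⟩
      refine ⟨hn h hh x hx, ?_⟩
      rw [conj_pow, hx']; simp
    · rintro ⟨x, hx, hx'⟩
      exact ⟨1, Subtype.ext (by simpa using hx')⟩
  have hgT : (g : G) ∈ T := by
    refine ⟨g.2, ?_⟩
    have := pow_orderOf_eq_one g
    rw [hg] at this
    simpa [Subtype.ext_iff] using this
  have := le_Op hT hgT
  rw [hH p hp, Subgroup.mem_bot] at this
  have h1 : g = 1 := Subtype.ext this
  rw [h1, orderOf_one] at hg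
  exact hp.ne_one hg.symm

theorem solv_triv [Finite G] {H : Subgroup G} (hH : ∀ p : ℕ, p.Prime → Op p H = ⊥) :
    ∀ (k : ℕ) (A : Subgroup G), Nat.card A ≤ k → A ≤ H → Nz H A → Group.IsSolvable A → A = ⊥ := by
  intro k
  induction k with
  | zero =>
    intro A hk
    have := Nat.card_pos (α := A)
    omega
  | succ k ih =>
    intro A hk hA hn hs
    by_contra hne
    have hnt : Nontrivial A := (Subgroup.nontrivial_iff_ne_bot A).2 hne
    have hlt := Group.IsSolvable.commutator_lt_top_of_nontrivial A
    let B : Subgroup G := (commutator A).map A.subtype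
    have hBA : B ≤ A := by
      rintro _ ⟨b, _, rfl⟩
      exact b.2
    have hBlt : B < A := by
      refine lt_of_le_of_ne hBA fun h => hlt.ne ?_
      rw [eq_top_iff]
      intro a _
      have : (a : G) ∈ B := by
        rw [h]; exact a.2
      obtain ⟨b, hb, hba⟩ := this
      have : b = a := Subtype.ext hba
      exact this ▸ hb
    have hB : B = ⁅A, A⁆ := by
      change (commutator A).map A.subtype = _
      rw [commutator_def, Subgroup.map_commutator]
      simp [← MonoidHom.range_eq_map]
    have hB0 : B = ⊥ := by
      apply ih B
      · have : Nat.card B < Nat.card A := by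
          have := Set.ncard_lt_ncard (SetLike.coe_ssubset_coe.2 hBlt) (Set.toFinite _)
          exact this
        omega
      · exact hBA.trans hA
      · apply Nz.of_cj
        intro g hg
        have := hn.cj_eq g hg
        unfold cj at *
        rw [hB, Subgroup.map_commutator, this]
      · exact Group.isSolvable_of_isSolvable_injective (f := Subgroup.inclusion hBA)
          (Subgroup.inclusion_injective hBA)
    apply hne
    apply abel_triv hH A hA hn
    rw [hB, Subgroup.commutator_eq_bot_iff_le_centralizer] at hB0
    intro a ha b hb
    exact ((Subgroup.mem_centralizer_iff.1 (hB0 ha)) b hb).symm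

/-- `M` is a normal subgroup of `H` with trivial centraliser. -/
def lg (H M : Subgroup G) : Prop := M ≤ H ∧ Nz H M ∧ ct H M = ⊥

theorem lg_cj {H M : Subgroup G} (h : lg H M) (g : G) : lg (cj g H) (cj g M) :=
  ⟨cj_mono g h.1, h.2.1.cj g, by rw [← cj_ct, h.2.2, cj_bot]⟩

theorem lg_inf [Finite G] {H : Subgroup G} (hH : ∀ p : ℕ, p.Prime → Op p H = ⊥) {A B : Subgroup G}
    (hA : lg H A) (hB : lg H B) : lg H (A ⊓ B) := by
  have hn := hA.2.1.inf hB.2.1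
  refine ⟨inf_le_left.trans hA.1, hn, ?_⟩
  set X := ct H (A ⊓ B) with hX
  have hXn : Nz H X := (Nz.self H).ct hn
  have hXH : X ≤ H := inf_le_left
  have h1 : (X ⊓ A) ⊓ B = ⊥ := by
    apply abel_triv hH _ (inf_le_left.trans (inf_le_left.trans hXH)) ((hXn.inf hA.2.1).inf hB.2.1)
    intro a ha b hb
    simp only [Subgroup.mem_inf] at ha hb
    exact (mem_ct.1 ha.1.1).2 b (Subgroup.mem_inf.2 ⟨hb.1.2, hb.2⟩)
  have hXA : X ⊓ A ≤ H := inf_le_left.trans hXH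
  have h2 : X ⊓ A = ⊥ := by
    rw [eq_bot_iff, ← hB.2.2]
    intro x hx
    exact mem_ct.2 ⟨hXA hx, fun m hm =>
      comm_of_disj (hB.2.1.mono hXA) ((hXn.inf hA.2.1).mono hB.1) h1 x hx m hm⟩
  rw [eq_bot_iff, ← hA.2.2]
  intro x hx
  exact mem_ct.2 ⟨hXH hx, fun m hm =>
      comm_of_disj (hA.2.1.mono hXH) (hXn.mono hA.1) h2 x hx m hm⟩

theorem lg_self [Finite G] {H : Subgroup G} (hH : ∀ p : ℕ, p.Prime → Op p H = ⊥) : lg H H := by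
  refine ⟨le_rfl, Nz.self H, ?_⟩
  apply abel_triv hH _ inf_le_left ((Nz.self H).ct (Nz.self H))
  intro a ha b hb
  exact (mem_ct.1 ha).2 b (mem_ct.1 hb).1

/-- intersection of all large normal subgroups (the socle) -/
def Dd (H : Subgroup G) : Subgroup G := sInf {M | lg H M}

theorem Dd_le {H M : Subgroup G} (h : lg H M) : Dd H ≤ M := sInf_le h

theorem cj_Dd (g : G) (H : Subgroup G) : Dd (cj g H) = cj g (Dd H) := by
  apply equivar Dd
  intro g H x hx
  unfold Dd
  rw [Subgroup.mem_sInf]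
  intro M hM
  rw [mem_cj] at hx
  have h1 := lg_cj hM g⁻¹
  rw [cj_inv_cj] at h1
  have h2 := Dd_le h1 hx
  rw [mem_cj] at h2
  simpa [mul_assoc] using h2

theorem Dd_lg [Finite G] {H : Subgroup G} (hH : ∀ p : ℕ, p.Prime → Op p H = ⊥) : lg H (Dd H) := by
  have key : ∀ s : Set (Subgroup G), s.Finite → s ⊆ {M | lg H M} → lg H (H ⊓ sInf s) := by
    intro s hs
    induction s, hs using Set.Finite.induction_on with
    | empty => intro _; simpa using lg_self hH
    | insert _ _ ih =>
      intro h
      rw [Set.insert_subset_iff] at h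
      rw [sInf_insert, inf_left_comm]
      exact lg_inf hH h.1 (ih h.2)
  have := key {M | lg H M} (Set.toFinite _) le_rfl
  have h2 : H ⊓ sInf {M | lg H M} = Dd H := inf_eq_right.2 (Dd_le (lg_self hH))
  rwa [h2] at this

theorem Dd_eq [Finite G] {H L : Subgroup G} (hH : ∀ p : ℕ, p.Prime → Op p H = ⊥)
    (hL : ∀ p : ℕ, p.Prime → Op p L = ⊥) (h : lg H L) : Dd H = Dd L := by
  have h1 := Dd_lg hH
  have h2 := Dd_lg hL
  have hLn : Nz H (Dd L) := by
    apply Nz.of_cj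
    intro g hg
    rw [← cj_Dd, h.2.1.cj_eq g hg]
  apply le_antisymm
  · apply Dd_le
    refine ⟨h2.1.trans h.1, hLn, ?_⟩
    rw [eq_bot_iff, ← h.2.2]
    have hcn : Nz H (ct H (Dd L)) := (Nz.self H).ct hLn
    have hcH : ct H (Dd L) ≤ H := inf_le_left
    intro x hx
    refine mem_ct.2 ⟨hcH hx, fun m hm => ?_⟩
    refine comm_of_disj (h.2.1.mono hcH) (hcn.mono h.1) ?_ x hx m hm
    rw [eq_bot_iff, ← h2.2.2]
    intro y hy
    rw [Subgroup.mem_inf, mem_ct] at hy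
    exact mem_ct.2 ⟨hy.2, hy.1.2⟩
  · apply Dd_le
    refine ⟨Dd_le h, h1.2.1.mono h.1, ?_⟩
    rw [eq_bot_iff, ← h1.2.2]
    intro y hy
    rw [mem_ct] at *
    exact ⟨h.1 hy.1, hy.2⟩

theorem Op_sub [Finite G] {H L : Subgroup G} (hH : ∀ p : ℕ, p.Prime → Op p H = ⊥) (h1 : L ≤ H)
    (h2 : Nz H L) : ∀ p : ℕ, p.Prime → Op p L = ⊥ := by
  intro p hp
  rw [eq_bot_iff, ← hH p hp]
  apply le_Op
  refine ⟨(Op_pn p L).1.trans h1, ?_, (Op_pn p L).2.2⟩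
  apply Nz.of_cj
  intro g hg
  rw [← cj_Op, h2.cj_eq g hg]

end Grp

section Main
variable {G : Type*} [Group G] {V : Type*} [MulAction G V]

/-- the facts about a locally `L` pair that the proof uses -/
structure LSetup (m : ℕ) (Γ : SimpleGraph V) (K : V → Subgroup G) : Prop where
  faith : ∀ g : G, (∀ v : V, g • v = v) → g = 1
  conn : Γ.Connected
  adj : ∀ (g : G) (u v : V), Γ.Adj u v → Γ.Adj (g • u) (g • v)
  vt : ∀ u v : V, ∃ g : G, g • u = v
  Kst : ∀ v : V, K v ≤ stabilizer G v
  Knb : ∀ v w : V, Γ.Adj v w → K v ≤ stabilizer G w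
  Kcj : ∀ (g : G) (v : V), K (g • v) = cj g (K v)
  lt : ∀ y z w : V, Γ.Adj y z → Γ.Adj y w → ∃ g : G, g • y = y ∧ g • z = w
  psi : ∀ x y : V, Γ.Adj x y →
    ∃ ψ : ↥(stabilizer G x ⊓ stabilizer G y) →* Equiv.Perm (Fin m),
      Function.Surjective ψ ∧ ∀ g, ψ g = 1 ↔ (g : G) ∈ K x
  sp : ∀ y x : V, Γ.Adj y x → ∀ R : Subgroup G, R ≤ stabilizer G y → Nz (stabilizer G y) R →
    ∀ r ∈ R, r • x = x → r ∉ K y → ∀ z w : V, Γ.Adj y z → Γ.Adj y w → ∃ g ∈ R, g • z = w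

namespace LSetup
variable {m : ℕ} {Γ : SimpleGraph V} {K : V → Subgroup G}

theorem swap (S : LSetup m Γ K) {x y : V} (h : Γ.Adj x y) : ∃ t : G, t • x = y ∧ t • y = x := by
  obtain ⟨g, hg⟩ := S.vt x y
  have h1 := S.adj g _ _ h
  rw [hg] at h1
  obtain ⟨k, hk, hk'⟩ := S.lt y (g • y) x h1 h.symm
  exact ⟨k * g, by rw [mul_smul, hg, hk], by rw [mul_smul, hk']⟩

theorem triv (S : LSetup m Γ K) {x y : V} (h : Γ.Adj y x) (t : G) (ht : t • y = x) (M : Subgroup G)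
    (hM : M ≤ stabilizer G y) (h1 : ∀ g : G, g • y = y → cj g M = M) (h2 : cj t M = M) :
    M = ⊥ := by
  have key : ∀ v : V, ∃ k : G, cj k M = M ∧ k • y = v := by
    intro v
    have hr := S.conn.preconnected y v
    rw [SimpleGraph.reachable_iff_reflTransGen] at hr
    induction hr with
    | refl => exact ⟨1, cj_one M, one_smul _ _⟩
    | tail _ hbc ih =>
      rename_i b c _
      obtain ⟨k, hk, hky⟩ := ih
      have h3 : Γ.Adj y (k⁻¹ • c) := by
        have := S.adj k⁻¹ _ _ hbc
        rwa [← hky, inv_smul_smul] at this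
      obtain ⟨g, hg, hg'⟩ := S.lt y x _ h h3
      refine ⟨k * g * t, ?_, ?_⟩
      · rw [← cj_cj, ← cj_cj, h2, h1 g hg, hk]
      · rw [mul_smul, mul_smul, ht, hg', smul_inv_smul]
  rw [eq_bot_iff]
  intro a ha
  rw [Subgroup.mem_bot]
  apply S.faith
  intro v
  obtain ⟨k, hk, rfl⟩ := key v
  rw [← hk, mem_cj] at ha
  have := hM ha
  rw [mem_stabilizer_iff, mul_smul, mul_smul] at this
  have h5 := congrArg (k • ·) this
  simpa using h5

theorem Knz (S : LSetup m Γ K) (y : V) : Nz (stabilizer G y) (K y) := by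
  apply Nz.of_cj
  intro g hg
  rw [← S.Kcj, mem_stabilizer_iff.1 hg]

theorem Knz2 (S : LSetup m Γ K) (x y : V) :
    Nz (stabilizer G x ⊓ stabilizer G y) (K x ⊓ K y) :=
  ((S.Knz x).mono inf_le_left).inf ((S.Knz y).mono inf_le_right)

theorem Kle (S : LSetup m Γ K) {x y : V} (h : Γ.Adj x y) :
    K x ≤ stabilizer G x ⊓ stabilizer G y := le_inf (S.Kst x) (S.Knb x y h)

/-- the case that some `O_p(K y)` is nontrivial -/
theorem caseA [Finite G] (S : LSetup m Γ K) (hm : 2 ≤ m) {x y : V} (h : Γ.Adj x y) (p : ℕ)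
    (hp : p.Prime) (hO : Op p (K x) ≠ ⊥) :
    ((m = 2 ∧ p = 2) ∨ (m = 3 ∧ p = 3) ∨ (m = 4 ∧ p = 2)) ∧ IsPGroup p ↥(K x ⊓ K y) := by
  have hF : Fact p.Prime := ⟨hp⟩
  obtain ⟨t, htx, hty⟩ := S.swap h
  have hQ : ∀ (g : G) (v : V), Op p (K (g • v)) = cj g (Op p (K v)) := by
    intro g v; rw [S.Kcj, cj_Op]
  have hQn : ∀ v : V, Nz (stabilizer G v) (Op p (K v)) := by
    intro v
    apply Nz.of_cj
    intro g hg
    rw [← hQ, mem_stabilizer_iff.1 hg]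
  -- Q_x is not contained in K_y
  have hA1 : ¬ Op p (K x) ≤ K y := by
    intro hle
    have h1 : Op p (K x) ≤ Op p (K y) :=
      le_Op ⟨hle, (hQn x).mono (S.Knb y x h.symm), (Op_pn p (K x)).2.2⟩
    have h2 : Op p (K y) ≤ Op p (K x) := by
      have := cj_mono t h1
      rwa [← hQ, ← hQ, htx, hty] at this
    have h3 := le_antisymm h1 h2
    apply hO
    apply S.triv h t htx
    · exact (Op_pn p (K x)).1.trans (S.Kst x)
    · intro g hg; exact (hQn x).cj_eq g hg
    · rw [← hQ, htx, h3]
  obtain ⟨r, hr, hrK⟩ := SetLike.not_le_iff_exists.1 hA1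
  refine ⟨?_, ?_⟩
  · obtain ⟨ψ, hψ, hker⟩ := S.psi y x h.symm
    have hle : Op p (K x) ≤ stabilizer G y ⊓ stabilizer G x :=
      (Op_pn p (K x)).1.trans (le_inf (S.Knb x y h) (S.Kst x))
    apply P4 m p hm hp (((Op p (K x)).subgroupOf (stabilizer G y ⊓ stabilizer G x)).map ψ)
    · exact (IsPGroup.comap_subtype (Op_pn p (K x)).2.2).map ψ
    · have : ((Op p (K x)).subgroupOf (stabilizer G y ⊓ stabilizer G x)).Normal := by
        constructor
        intro a ha g
        rw [Subgroup.mem_subgroupOf] at *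
        exact hQn x g (Subgroup.mem_inf.1 g.2).2 a ha
      exact this.map ψ hψ
    · intro hbot
      have : ψ ⟨r, hle hr⟩ ∈ ((Op p (K x)).subgroupOf (stabilizer G y ⊓ stabilizer G x)).map ψ :=
        Subgroup.mem_map_of_mem ψ (Subgroup.mem_subgroupOf.2 hr)
      rw [hbot, Subgroup.mem_bot, hker] at this
      exact hrK this
  · apply pgroup_of_Up hp
    set X := Up p (K x ⊓ K y) with hX
    have hXxy : ∀ g : G, g • x = x → g • y = y → cj g X = X := by
      intro g hgx hgy
      rw [hX, ← cj_Up, (S.Knz2 x y).cj_eq g (Subgroup.mem_inf.2 ⟨hgx, hgy⟩)]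
    have hXn : Nz (stabilizer G x ⊓ stabilizer G y) X :=
      Nz.of_cj fun g hg => hXxy g (Subgroup.mem_inf.1 hg).1 (Subgroup.mem_inf.1 hg).2
    have hQX : ∀ z : V, Γ.Adj y z → Nz (Op p (K z)) X := by
      intro z hyz q hq a ha
      -- reduce to generators
      have hgen : ∀ a : G, a ∈ K x ⊓ K y → (orderOf a).Coprime p → q * a * q⁻¹ ∈ X := by
        intro a ha hco
        have haX : a ∈ X := Subgroup.subset_closure ⟨ha, hco⟩
        have haK := Subgroup.mem_inf.1 ha
        have hc : q * a * q⁻¹ * a⁻¹ ∈ Op p (K y) := by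
          have hqa : q * (a * q⁻¹ * a⁻¹) ∈ Op p (K z) :=
            mul_mem hq (hQn z a (S.Knb y z hyz haK.2) _ (inv_mem hq))
          have hqK : (q * a * q⁻¹) * a⁻¹ ∈ K y :=
            mul_mem (S.Knz y q (S.Knb z y hyz.symm ((Op_pn p (K z)).1 hq)) a haK.2) (inv_mem haK.2)
          have h5 : pn p (K y) (Op p (K z) ⊓ K y) := by
            refine ⟨inf_le_right, ((hQn z).mono (S.Knb y z hyz)).inf (Nz.self _), ?_⟩
            exact (Op_pn p (K z)).2.2.to_inf_left
          refine le_Op h5 (Subgroup.mem_inf.2 ⟨?_, hqK⟩)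
          simpa [mul_assoc] using hqa
        have h6 := mem_of_coprime X (Op p (K y)) (Op_pn p (K y)).2.2
          (hXn.mono ((Op_pn p (K y)).1.trans (le_inf (S.Knb y x h.symm) (S.Kst y))))
          a (q * a * q⁻¹ * a⁻¹) haX hc (by
            have : q * a * q⁻¹ * a⁻¹ * a = MulAut.conj q a := by simp
            rw [this]
            have : orderOf (MulAut.conj q a) = orderOf a :=
              orderOf_injective (MulAut.conj q).toMonoidHom (MulAut.conj q).injective a
            rw [this]; exact hco)
        simpa using h6
      have : X ≤ cj q⁻¹ X := by
        rw [hX]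
        unfold Up
        rw [Subgroup.closure_le]
        intro a ha
        change a ∈ cj q⁻¹ X
        rw [mem_cj]
        simpa using hgen a ha.1 ha.2
      have := this ha
      rw [mem_cj] at this
      simpa using this
    -- the group generated by the Q_z
    let R : Subgroup G := Subgroup.closure {g | ∃ z, Γ.Adj y z ∧ g ∈ Op p (K z)}
    have hRX : ∀ g ∈ R, cj g X = X := by
      intro g hg
      induction hg using Subgroup.closure_induction with
      | mem g hg =>
        obtain ⟨z, hz, hgz⟩ := hg
        exact (hQX z hz).cj_eq g hgz
      | one => exact cj_one X
      | mul a b _ _ iha ihb => rw [← cj_cj, ihb, iha]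
      | inv a _ iha =>
        have := cj_inv_cj a X
        rwa [iha] at this
    have hRy : R ≤ stabilizer G y := by
      rw [Subgroup.closure_le]
      rintro g ⟨z, hz, hg⟩
      exact S.Knb z y hz.symm ((Op_pn p (K z)).1 hg)
    have hRn : Nz (stabilizer G y) R := by
      intro k hk
      have : R ≤ cj k⁻¹ R := by
        rw [Subgroup.closure_le]
        rintro g ⟨z, hz, hg⟩
        change g ∈ cj k⁻¹ R
        rw [mem_cj, inv_inv]
        apply Subgroup.subset_closure
        refine ⟨k • z, ?_, ?_⟩
        · have := S.adj k _ _ hz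
          rwa [mem_stabilizer_iff.1 hk] at this
        · rw [hQ, conj_mem_cj]; exact hg
      intro a ha
      have := this ha
      rwa [mem_cj, inv_inv] at this
    have htr := S.sp y x h.symm R hRy hRn r
      (Subgroup.subset_closure ⟨x, h.symm, hr⟩) (S.Kst x ((Op_pn p (K x)).1 hr)) hrK
    apply S.triv h.symm t hty
    · exact (Up_le p _).trans (inf_le_right.trans (S.Kst y))
    · intro g hg
      have hgx : Γ.Adj y (g • x) := by
        have := S.adj g _ _ h.symm
        rwa [hg] at this
      obtain ⟨k, hk, hkx⟩ := htr (g • x) x hgx h.symm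
      have h1 : cj (k * g) X = X := by
        apply hXxy
        · rw [mul_smul, hkx]
        · rw [mul_smul, hg]; exact hRy hk
      rw [← cj_cj] at h1
      have h2 : cj k⁻¹ (cj k (cj g X)) = cj k⁻¹ X := by rw [h1]
      rw [cj_inv_cj, hRX _ (inv_mem hk)] at h2
      exact h2
    · rw [hX, ← cj_Up, cj_inf, ← S.Kcj, ← S.Kcj, htx, hty, inf_comm]

end LSetup
end Main

section Main2
variable {G : Type*} [Group G] {V : Type*} [MulAction G V]

namespace LSetup
variable {m : ℕ} {Γ : SimpleGraph V} {K : V → Subgroup G}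

/-- the centraliser in `K y` of `K y ⊓ K z` -/
def PP (K : V → Subgroup G) (y z : V) : Subgroup G := ct (K y) (K y ⊓ K z)

theorem PP_cj (S : LSetup m Γ K) (g : G) (y z : V) : PP K (g • y) (g • z) = cj g (PP K y z) := by
  unfold PP
  rw [cj_ct, cj_inf, S.Kcj, S.Kcj]

theorem PP_nz (S : LSetup m Γ K) (y z : V) :
    Nz (stabilizer G z ⊓ stabilizer G y) (PP K y z) := by
  apply Nz.of_cj
  intro g hg
  rw [Subgroup.mem_inf, mem_stabilizer_iff, mem_stabilizer_iff] at hg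
  rw [← S.PP_cj, hg.1, hg.2]

theorem PP_le (y z : V) : PP K y z ≤ K y := inf_le_left

theorem Knz3 (S : LSetup m Γ K) {y z : V} (h : Γ.Adj y z) : Nz (K y) (K y ⊓ K z) :=
  (Nz.self _).inf ((S.Knz z).mono (S.Knb y z h))

theorem PP_disj [Finite G] (S : LSetup m Γ K) (hO : ∀ v : V, ∀ p : ℕ, p.Prime → Op p (K v) = ⊥)
    {y z : V} (h : Γ.Adj y z) : PP K y z ⊓ K z = ⊥ := by
  apply abel_triv (hO y)
  · exact inf_le_left.trans (PP_le y z)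
  · exact ((Nz.self _).ct (S.Knz3 h)).inf ((S.Knz z).mono (S.Knb y z h))
  · intro a ha b hb
    rw [Subgroup.mem_inf] at ha hb
    exact (mem_ct.1 ha.1).2 b (Subgroup.mem_inf.2 ⟨PP_le y z hb.1, hb.2⟩)

theorem keyP [Finite G] (S : LSetup m Γ K) (hO : ∀ v : V, ∀ p : ℕ, p.Prime → Op p (K v) = ⊥)
    {y z : V} (h : Γ.Adj y z) (hP : PP K y z ≠ ⊥) (B : Subgroup G) (hB : B ≤ PP K y z)
    (hB1 : B ≠ ⊥) (hBn : Nz (K y) B) : ct (K y) B = K y ⊓ K z := by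
  have hd := S.PP_disj hO h
  obtain ⟨ψ, hψ, hker⟩ := S.psi z y h.symm
  have hKle : K y ≤ stabilizer G z ⊓ stabilizer G y := le_inf (S.Knb y z h) (S.Kst y)
  have hPle : PP K y z ≤ stabilizer G z ⊓ stabilizer G y := (PP_le y z).trans hKle
  have hBle : B ≤ stabilizer G z ⊓ stabilizer G y := hB.trans hPle
  let f : ↥(PP K y z) →* Equiv.Perm (Fin m) := ψ.comp (Subgroup.inclusion hPle)
  let fB : ↥B →* Equiv.Perm (Fin m) := ψ.comp (Subgroup.inclusion hBle)
  have hf : ∀ a : G, ∀ ha : a ∈ PP K y z, ψ ⟨a, hPle ha⟩ = 1 → a = 1 := by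
    intro a ha h1
    rw [hker] at h1
    have : a ∈ PP K y z ⊓ K z := Subgroup.mem_inf.2 ⟨ha, h1⟩
    rwa [hd, Subgroup.mem_bot] at this
  have hfi : Function.Injective f := by
    rw [injective_iff_map_eq_one]
    intro a ha
    exact Subtype.ext (hf a a.2 ha)
  have hA : ¬ Group.IsSolvable f.range := by
    intro hs
    apply hP
    have : Group.IsSolvable ↥(PP K y z) :=
      solvable_of_solvable_injective (f := (MonoidHom.ofInjective hfi).toMonoidHom)
        (MonoidHom.ofInjective hfi).injective
    exact solv_triv (hO y) _ _ le_rfl (PP_le y z) ((S.PP_nz y z).mono hKle) this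
  have hAn : f.range.Normal := by
    constructor
    rintro _ ⟨a, rfl⟩ σ
    obtain ⟨g, rfl⟩ := hψ σ
    refine ⟨⟨g * a * (g : G)⁻¹, S.PP_nz y z g g.2 a a.2⟩, ?_⟩
    change ψ _ = ψ g * ψ _ * (ψ g)⁻¹
    rw [← map_mul, ← map_inv, ← map_mul]
    rfl
  obtain ⟨h5, hAlt⟩ := P1 m f.range hA hAn
  have hAltB : alternatingGroup (Fin m) ≤ fB.range := by
    apply P2 (by simpa using h5)
    · intro hb
      apply hB1
      rw [eq_bot_iff]
      intro b hb'
      rw [Subgroup.mem_bot]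
      apply hf b (hB hb')
      have : fB ⟨b, hb'⟩ ∈ fB.range := ⟨_, rfl⟩
      rwa [hb, Subgroup.mem_bot] at this
    · intro a ha b hb
      obtain ⟨a', rfl⟩ := hAlt ha
      obtain ⟨b', rfl⟩ := hb
      refine ⟨⟨a' * b' * (a' : G)⁻¹, hBn a' (PP_le y z a'.2) b' b'.2⟩, ?_⟩
      change ψ _ = ψ _ * ψ _ * (ψ _)⁻¹
      rw [← map_mul, ← map_inv, ← map_mul]
      rfl
  apply le_antisymm
  · intro k hk
    obtain ⟨hk1, hk2⟩ := mem_ct.1 hk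
    refine Subgroup.mem_inf.2 ⟨hk1, ?_⟩
    have : ψ ⟨k, hKle hk1⟩ = 1 := by
      apply P3 (by simp; omega)
      intro a ha
      obtain ⟨b, rfl⟩ := hAltB ha
      change ψ _ * ψ _ = ψ _ * ψ _
      rw [← map_mul, ← map_mul]
      congr 1
      exact Subtype.ext (hk2 b b.2)
    exact (hker _).1 this
  · intro k hk
    refine mem_ct.2 ⟨(Subgroup.mem_inf.1 hk).1, fun b hb => ?_⟩
    exact ((mem_ct.1 (hB hb)).2 k hk).symm

theorem caseB [Finite G] (S : LSetup m Γ K) (hO : ∀ v : V, ∀ p : ℕ, p.Prime → Op p (K v) = ⊥)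
    {x y : V} (h : Γ.Adj x y) : K x ⊓ K y = ⊥ := by
  obtain ⟨t, htx, hty⟩ := S.swap h
  have htL : cj t (K y ⊓ K x) = K y ⊓ K x := by
    rw [cj_inf, ← S.Kcj, ← S.Kcj, htx, hty, inf_comm]
  rw [inf_comm]
  by_cases hC : PP K y x = ⊥
  · have hlg : lg (K y) (K y ⊓ K x) := ⟨inf_le_left, S.Knz3 h.symm, hC⟩
    have hOL := Op_sub (hO y) hlg.1 hlg.2.1
    have hD := Dd_eq (hO y) hOL hlg
    have hD0 : Dd (K y) = ⊥ := by
      apply S.triv h.symm t hty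
      · exact (Dd_lg (hO y)).1.trans (S.Kst y)
      · intro g hg
        rw [← cj_Dd, ← S.Kcj, hg]
      · rw [hD, ← cj_Dd, htL]
    have h1 := (Dd_lg hOL).2.2
    rw [← hD, hD0] at h1
    rw [eq_bot_iff, ← h1]
    intro a ha
    refine mem_ct.2 ⟨ha, fun b hb => ?_⟩
    rw [Subgroup.mem_bot.1 hb, mul_one, one_mul]
  · have hPz : ∀ z : V, Γ.Adj y z → PP K y z ≠ ⊥ := by
      intro z hz hbot
      obtain ⟨g, hg, hgz⟩ := S.lt y z x hz h.symm
      apply hC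
      have := S.PP_cj g y z
      rwa [hg, hgz, hbot, cj_bot] at this
    have hPn : ∀ z : V, Γ.Adj y z → Nz (K y) (PP K y z) := fun z hz =>
      (S.PP_nz y z).mono (le_inf (S.Knb y z hz) (S.Kst y))
    have hpair : ∀ z z' : V, Γ.Adj y z → Γ.Adj y z' → PP K y z ⊓ PP K y z' ≠ ⊥ →
        K y ⊓ K z = K y ⊓ K z' := by
      intro z z' hz hz' hne
      rw [← S.keyP hO hz (hPz z hz) _ inf_le_left hne ((hPn z hz).inf (hPn z' hz')),
        ← S.keyP hO hz' (hPz z' hz') _ inf_le_right hne ((hPn z hz).inf (hPn z' hz'))]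
    have hcadj : ∀ g : G, g • y = y → ∀ z, Γ.Adj y z → Γ.Adj y (g • z) := by
      intro g hg z hz
      have := S.adj g _ _ hz
      rwa [hg] at this
    have h3 : ∀ c ∈ PP K x y, ∀ z, Γ.Adj y z → K y ⊓ K (c • z) = K y ⊓ K z := by
      intro c hc z hz
      have hcK := PP_le x y hc
      have hcy : c • y = y := S.Knb x y h hcK
      have hcx : c • x = x := S.Kst x hcK
      have hz' := hcadj c hcy z hz
      by_cases hd : PP K y z ⊓ (K y ⊓ K x) = ⊥
      · have hle : PP K y z ≤ PP K y x := by
          intro a ha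
          refine mem_ct.2 ⟨PP_le y z ha, fun b hb => ?_⟩
          exact comm_of_disj ((S.Knz3 h.symm).mono (PP_le y z))
            ((hPn z hz).mono inf_le_left) hd a ha b hb
        have h4 : K y ⊓ K z = K y ⊓ K x := by
          apply hpair z x hz h.symm
          rw [inf_eq_left.2 hle]
          exact hPz z hz
        have h5 := congrArg (cj c) h4
        rw [cj_inf, cj_inf, ← S.Kcj, ← S.Kcj, ← S.Kcj, hcy, hcx] at h5
        rw [h5, h4]
      · symm
        apply hpair z (c • z) hz hz'
        intro hbot
        apply hd
        rw [eq_bot_iff, ← hbot]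
        intro a ha
        rw [Subgroup.mem_inf] at ha
        refine Subgroup.mem_inf.2 ⟨ha.1, ?_⟩
        have h6 := S.PP_cj c y z
        rw [hcy] at h6
        rw [h6, mem_cj]
        have h7 := (mem_ct.1 hc).2 a (by rw [inf_comm]; exact ha.2)
        rw [mul_assoc, ← h7, inv_mul_cancel_left]
        exact ha.1
    let R : Subgroup G :=
      { carrier := {g | g • y = y ∧ ∀ z, Γ.Adj y z → K y ⊓ K (g • z) = K y ⊓ K z}
        one_mem' := ⟨one_smul _ _, fun z _ => by rw [one_smul]⟩
        mul_mem' := by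
          rintro a b ⟨ha, ha'⟩ ⟨hb, hb'⟩
          refine ⟨by rw [mul_smul, hb, ha], fun z hz => ?_⟩
          rw [mul_smul, ha' _ (hcadj b hb z hz), hb' z hz]
        inv_mem' := by
          rintro a ⟨ha, ha'⟩
          have hi : a⁻¹ • y = y := by rw [inv_smul_eq_iff, ha]
          refine ⟨hi, fun z hz => ?_⟩
          have := ha' _ (hcadj a⁻¹ hi z hz)
          rw [smul_inv_smul] at this
          exact this.symm }
    have hRn : Nz (stabilizer G y) R := by
      rintro g hg a ⟨ha, ha'⟩
      rw [mem_stabilizer_iff] at hg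
      have hi : g⁻¹ • y = y := by rw [inv_smul_eq_iff, hg]
      refine ⟨by rw [mul_smul, mul_smul, hi, ha, hg], fun z hz => ?_⟩
      have := congrArg (cj g) (ha' _ (hcadj g⁻¹ hi z hz))
      rw [cj_inf, cj_inf, ← S.Kcj, ← S.Kcj, ← S.Kcj, hg, smul_inv_smul] at this
      rw [mul_smul, mul_smul]
      exact this
    have hCx : PP K x y ≠ ⊥ := by
      have h6 := S.PP_cj t y x
      rw [htx, hty] at h6
      intro hb
      rw [hb] at h6
      apply hC
      rw [← cj_inv_cj t (PP K y x), ← h6, cj_bot]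
    obtain ⟨c, hc, hc1⟩ := (Subgroup.ne_bot_iff_exists_ne_one.1 hCx : ∃ a : PP K x y, a ≠ 1).elim
      fun a ha => (⟨a, a.2, fun h => ha (Subtype.ext h)⟩ : ∃ a ∈ PP K x y, a ≠ 1)
    have hcK : c ∉ K y := by
      intro hcy
      have : c ∈ PP K x y ⊓ K y := Subgroup.mem_inf.2 ⟨hc, hcy⟩
      rw [S.PP_disj hO h, Subgroup.mem_bot] at this
      exact hc1 this
    have htr := S.sp y x h.symm R (fun g hg => hg.1) hRn c
      ⟨S.Knb x y h (PP_le x y hc), h3 c hc⟩ (S.Kst x (PP_le x y hc)) hcK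
    apply S.triv h.symm t hty
    · exact inf_le_left.trans (S.Kst y)
    · intro g hg
      obtain ⟨r, hr, hrx⟩ := htr x (g • x) h.symm (hcadj g hg x h.symm)
      rw [cj_inf, ← S.Kcj, ← S.Kcj, hg, ← hrx, hr.2 x h.symm]
    · exact htL

end LSetup
end Main2

theorem opairs_fix {n : ℕ} {σ : Equiv.Perm (Fin n)} {z : OPairs n} :
    σ • z = z ↔ σ z.1.1 = z.1.1 ∧ σ z.1.2 = z.1.2 := by
  constructor
  · intro h
    have := congrArg Subtype.val h
    exact ⟨congrArg Prod.fst this, congrArg Prod.snd this⟩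
  · intro h
    exact Subtype.ext (Prod.ext h.1 h.2)

theorem opairs_theta (n : ℕ) (z : OPairs n) :
    ∃ θ : ↥(stabilizer (Equiv.Perm (Fin n)) z) →* Equiv.Perm (Fin (n - 2)),
      Function.Surjective θ ∧ Function.Injective θ := by
  let T := {i : Fin n // i ≠ z.1.1 ∧ i ≠ z.1.2}
  have hc : Fintype.card T = n - 2 := by
    rw [Fintype.card_subtype]
    have : (Finset.univ.filter fun i : Fin n => i ≠ z.1.1 ∧ i ≠ z.1.2) = {z.1.1, z.1.2}ᶜ := by
      ext i; simp
    rw [this, Finset.card_compl, Finset.card_pair z.2, Fintype.card_fin]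
  let E : T ≃ Fin (n - 2) := Fintype.equivFinOfCardEq hc
  have hst : ∀ σ : ↥(stabilizer (Equiv.Perm (Fin n)) z), ∀ i : Fin n,
      ((σ : Equiv.Perm (Fin n)) i ≠ z.1.1 ∧ (σ : Equiv.Perm (Fin n)) i ≠ z.1.2) ↔
        (i ≠ z.1.1 ∧ i ≠ z.1.2) := by
    intro σ i
    obtain ⟨h1, h2⟩ := opairs_fix.1 (mem_stabilizer_iff.1 σ.2)
    have e1 : (σ : Equiv.Perm (Fin n)) i = z.1.1 ↔ i = z.1.1 := by
      conv_lhs => rw [← h1]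
      exact (σ : Equiv.Perm (Fin n)).injective.eq_iff
    have e2 : (σ : Equiv.Perm (Fin n)) i = z.1.2 ↔ i = z.1.2 := by
      conv_lhs => rw [← h2]
      exact (σ : Equiv.Perm (Fin n)).injective.eq_iff
    rw [Ne, Ne, e1, e2]
  let θ0 : ↥(stabilizer (Equiv.Perm (Fin n)) z) →* Equiv.Perm T :=
    MonoidHom.mk' (fun σ => (σ : Equiv.Perm (Fin n)).subtypePerm (hst σ)) (by
      intro a b; ext i; rfl)
  have hs : Function.Surjective θ0 := by
    intro τ
    refine ⟨⟨Equiv.Perm.ofSubtype τ, ?_⟩, ?_⟩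
    · rw [mem_stabilizer_iff, opairs_fix]
      exact ⟨Equiv.Perm.ofSubtype_apply_of_not_mem τ (by simp),
        Equiv.Perm.ofSubtype_apply_of_not_mem τ (by simp)⟩
    · exact Equiv.Perm.subtypePerm_ofSubtype τ
  have hi : Function.Injective θ0 := by
    rw [injective_iff_map_eq_one]
    intro σ h
    apply Subtype.ext
    ext i
    by_cases h1 : i ≠ z.1.1 ∧ i ≠ z.1.2
    · have := congrArg (fun τ : Equiv.Perm T => ((τ ⟨i, h1⟩ : T) : Fin n)) h
      exact congrArg Fin.val this
    · obtain ⟨k1, k2⟩ := opairs_fix.1 (mem_stabilizer_iff.1 σ.2)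
      have : i = z.1.1 ∨ i = z.1.2 := by tauto
      rcases this with rfl | rfl
      · rw [k1]; rfl
      · rw [k2]; rfl
  refine ⟨(E.permCongrHom).toMonoidHom.comp θ0, ?_, ?_⟩
  · exact (E.permCongrHom).surjective.comp hs
  · exact (E.permCongrHom).injective.comp hi

theorem opairs_faith {n : ℕ} (hn : 2 ≤ n) {σ : Equiv.Perm (Fin n)} (h : ∀ z : OPairs n, σ • z = z) :
    σ = 1 := by
  ext i
  have : Nontrivial (Fin n) := Fin.nontrivial_iff_two_le.2 hn
  obtain ⟨j, hj⟩ := exists_ne i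
  rw [(opairs_fix.1 (h ⟨(i, j), hj.symm⟩)).1]
  rfl

theorem opairs_trans {n : ℕ} (hn : 4 ≤ n) (z w : OPairs n) :
    ∃ σ : Equiv.Perm (Fin n), σ • z = w := by
  let i0 : Fin n := ⟨0, by omega⟩
  let i1 : Fin n := ⟨1, by omega⟩
  let i2 : Fin n := ⟨2, by omega⟩
  obtain ⟨g, -, hg⟩ := P5 n hn ⊤ inferInstance (Equiv.swap i0 i1) (Subgroup.mem_top _) (by
    intro h
    have := congrArg (fun τ : Equiv.Perm (Fin n) => (τ i0 : Fin n)) h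
    simp [i0, i1] at this) i2
    (Equiv.swap_apply_of_ne_of_ne (by simp [i2, i0]) (by simp [i2, i1])) z w
  exact ⟨g, hg⟩

theorem mem_ball1 {V : Type*} {Γ : SimpleGraph V} (hconn : Γ.Connected)
    {G : Subgroup (Equiv.Perm V)} {x : V} {g : G} :
    g ∈ ballStab Γ G x 1 ↔ g • x = x ∧ ∀ w, Γ.Adj x w → g • w = w := by
  unfold ballStab
  simp only [Subgroup.mem_iInf, mem_stabilizer_iff]
  constructor
  · intro h
    refine ⟨h x (by simp), fun w hw => h w ?_⟩
    rw [SimpleGraph.dist_eq_one_iff_adj.2 hw]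
  · rintro ⟨h1, h2⟩ v hv
    rcases Nat.le_one_iff_eq_zero_or_eq_one.1 hv with h | h
    · rw [hconn.dist_eq_zero_iff] at h
      rw [← h]; exact h1
    · exact h2 v (SimpleGraph.dist_eq_one_iff_adj.1 h)

theorem mk_setup {V : Type*} (n : ℕ) (hn : 4 ≤ n) (Γ : SimpleGraph V) (hconn : Γ.Connected)
    (G : Subgroup (Equiv.Perm V)) (hloc : IsLocallyOPairs n Γ G) :
    LSetup (n - 2) Γ (fun v => ballStab Γ G v 1) := by
  obtain ⟨hadj, htrans, hl⟩ := hloc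
  have hadj' : ∀ (g : G) (u v : V), Γ.Adj u v ↔ Γ.Adj (g • u) (g • v) :=
    fun g u v => hadj g g.2 u v
  choose e φ hφ he using hl
  have key : ∀ (x : V) (g : stabilizer G x) (v w : Γ.neighborSet x),
      φ x g • e x v = e x w ↔ g • (v : V) = w := by
    intro x g v w
    rw [← he x g v]
    constructor
    · intro h; rw [h, Equiv.symm_apply_apply]
    · intro h
      rw [← Equiv.symm_apply_eq]
      exact Subtype.ext h
  have hk : ∀ (x : V) (g : stabilizer G x), φ x g = 1 ↔ (g : G) ∈ ballStab Γ G x 1 := by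
    intro x g
    rw [mem_ball1 hconn]
    constructor
    · intro h
      refine ⟨g.2, fun w hw => ?_⟩
      exact (key x g ⟨w, hw⟩ ⟨w, hw⟩).1 (by rw [h, one_smul])
    · rintro ⟨-, h⟩
      apply opairs_faith (by omega)
      intro z
      obtain ⟨v, rfl⟩ := (e x).surjective z
      exact (key x g v v).2 (h v v.2)
  refine ⟨?_, hconn, fun g u v h => (hadj' g u v).1 h, fun u v => exists_smul_eq G u v,
    ?_, ?_, ?_, ?_, ?_, ?_⟩
  · intro g h
    apply Subtype.ext
    ext v
    exact h v
  · intro v g hg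
    exact ((mem_ball1 hconn).1 hg).1
  · intro v w hvw g hg
    exact ((mem_ball1 hconn).1 hg).2 w hvw
  · intro g v
    ext k
    rw [mem_cj, mem_ball1 hconn, mem_ball1 hconn]
    have hm : ∀ w : V, (g⁻¹ * k * g) • w = w ↔ k • g • w = g • w := by
      intro w
      rw [mul_smul, mul_smul, inv_smul_eq_iff]
    rw [hm]
    refine and_congr_right fun _ => ⟨fun h w hw => ?_, fun h w hw => ?_⟩
    · rw [hm]; exact h _ ((hadj' g _ _).1 hw)
    · have h1 := (hadj' g⁻¹ _ _).1 hw
      rw [inv_smul_smul] at h1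
      have := h _ h1
      rwa [hm, smul_inv_smul] at this
  · intro y z w hz hw
    obtain ⟨σ, hσ⟩ := opairs_trans hn (e y ⟨z, hz⟩) (e y ⟨w, hw⟩)
    obtain ⟨g, rfl⟩ := hφ y σ
    exact ⟨g, g.2, (key y g ⟨z, hz⟩ ⟨w, hw⟩).1 hσ⟩
  · intro x y h
    obtain ⟨θ, hθ, hθi⟩ := opairs_theta n (e x ⟨y, h⟩)
    let ι : ↥(stabilizer G x ⊓ stabilizer G y) →* stabilizer G x := Subgroup.inclusion inf_le_left
    have hmem : ∀ g : ↥(stabilizer G x ⊓ stabilizer G y),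
        φ x (ι g) ∈ stabilizer (Equiv.Perm (Fin n)) (e x ⟨y, h⟩) := by
      intro g
      rw [mem_stabilizer_iff, key]
      exact (Subgroup.mem_inf.1 g.2).2
    let α := ((φ x).comp ι).codRestrict _ hmem
    refine ⟨θ.comp α, hθ.comp ?_, ?_⟩
    · rintro ⟨σ, hσ⟩
      obtain ⟨g, rfl⟩ := hφ x σ
      rw [mem_stabilizer_iff, key] at hσ
      exact ⟨⟨g, Subgroup.mem_inf.2 ⟨g.2, hσ⟩⟩, rfl⟩
    · intro g
      refine Iff.trans ?_ (hk x (ι g))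
      change θ (α g) = 1 ↔ _
      rw [map_eq_one_iff θ hθi]
      exact Subtype.ext_iff
  · intro y x h R hR hRn r hr hrx hrK z w hz hw
    have hN : (R.subgroupOf (stabilizer G y)).Normal := by
      constructor
      intro a ha g
      rw [Subgroup.mem_subgroupOf] at *
      exact hRn g g.2 a ha
    have h1 := (key y ⟨r, hR hr⟩ ⟨x, h⟩ ⟨x, h⟩).2 hrx
    obtain ⟨σ, ⟨g, hg, rfl⟩, hσ⟩ := P5 n hn ((R.subgroupOf (stabilizer G y)).map (φ y))
      (hN.map (φ y) (hφ y)) (φ y ⟨r, hR hr⟩)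
      (Subgroup.mem_map_of_mem _ (Subgroup.mem_subgroupOf.2 hr))
      (fun h2 => hrK ((hk y _).1 h2)) _ (opairs_fix.1 h1).1 (e y ⟨z, hz⟩) (e y ⟨w, hw⟩)
    exact ⟨g, hg, (key y g ⟨z, hz⟩ ⟨w, hw⟩).1 hσ⟩

/-- if `(Γ,G)` is locally `L` for `L` the group induced by `Sym(n)` on
ordered pairs of distinct elements (`n ≥ 4`) and `G_{xy}^{[1]} ≠ 1` for an edge `{x,y}`,
then `G_{xy}^{[1]}` is a `p`-group for a prime `p` with `(n,p) ∈ {(4,2),(5,3),(6,2)}`. -/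
theorem stmt_8 {V : Type*} [Fintype V] (n : ℕ) (hn : 4 ≤ n)
    (Γ : SimpleGraph V) (hconn : Γ.Connected)
    (G : Subgroup (Equiv.Perm V)) (hloc : IsLocallyOPairs n Γ G)
    (x y : V) (hxy : Γ.Adj x y)
    (hne : ballStab Γ G x 1 ⊓ ballStab Γ G y 1 ≠ ⊥) :
    ∃ p : ℕ, p.Prime ∧
      ((n = 4 ∧ p = 2) ∨ (n = 5 ∧ p = 3) ∨ (n = 6 ∧ p = 2)) ∧
      IsPGroup p ↥(ballStab Γ G x 1 ⊓ ballStab Γ G y 1) := by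
  have S := mk_setup n hn Γ hconn G hloc
  by_cases hO : ∃ p : ℕ, p.Prime ∧ Op p (ballStab Γ G x 1) ≠ ⊥
  · obtain ⟨p, hp, hp1⟩ := hO
    obtain ⟨h1, h2⟩ := S.caseA (by omega) hxy p hp hp1
    exact ⟨p, hp, by omega, h2⟩
  · push Not at hO
    refine absurd (S.caseB ?_ hxy) hne
    intro v p hp
    obtain ⟨g, rfl⟩ := S.vt x v
    have : ballStab Γ G (g • x) 1 = cj g (ballStab Γ G x 1) := S.Kcj g x
    change Op p (ballStab Γ G (g • x) 1) = ⊥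
    rw [this, cj_Op, hO p hp, cj_bot]
end
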